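/- arXiv:2507.09707 — 3 statements merged into one kernel-verified Lean document; each statement's English description precedes it below -/
import Mathlib

section
/- Let H and E be finite-dimensional Euclidean spaces, X ⊂ H and K ⊂ E compact subsets containing the origins, and S: H × E → H a C²-smooth map with S(0,0) = 0 and S(X × K) ⊂ X. Assume: (Dissipativity) for every ε > 0 there is an integer n_ε ≥ 1 such that |S_{n_ε}(u; 0, …, 0)| ≤ ε for all u ∈ X, where S_n(u; ζ_1, …, ζ_n) denotes the trajectory of u_k = S(u_{k−1}, ζ_k), u_0 = u; (Controllability) the map D_η S(0,0): E → H is surjective and D_u S(0,0): H → H is an isomorphism. Let {η_k} be a Markov process in E with a Feller continuous time-1 transition probability Q(y;·) such that supp D(η_0) ⊂ K and supp Q(y;·) ⊂ K for all y ∈ K, and assume: (Minorisation) there exist r > 0 and a bounded continuous function ρ: B̄_E(r) × E → ℝ₊ with ρ(0,0) > 0 such that Q(y; dz) ≥ ρ(y,z) ℓ(dz) for all y ∈ K ∩ B̄_E(r), where ℓ is the Lebesgue measure on E; (Strong recurrence) for every δ > 0 there exist an integer l ≥ 1 and κ > 0 such that Q_l(y; B_E(0, δ)) ≥ κ for all y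 ∈ K, where Q_k is the time-k transition probability. Then there exist a translation-invariant measure 𝛍 on X^ℤ and a number γ > 0 such that for every integer m ≥ 0 there is C_m > 0 such that for every initial state u ∈ X the trajectory {u_k} of the RDS u_k = S(u_{k−1}, η_k), u_0 = u, satisfies ‖D([u_k, …, u_{k+m}]) − 𝛍_m‖_var ≤ C_m e^{−γ k} for all k ≥ 0, where 𝛍_m is the projection of 𝛍 to X^{m+1}. -/
open MeasureTheory ProbabilityTheory Set Metric

/-- The trajectory of the system `u_k = S(u_{k-1}, ζ_k)` issued from `u₀` (with noise inputs
`ζ 1, ζ 2, …`). -/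
def traj {H E : Type*} (S : H × E → H) (u₀ : H) (ζ : ℕ → E) : ℕ → H
  | 0 => u₀
  | k + 1 => S (traj S u₀ ζ k, ζ (k + 1))

/-- The time-`l` transition probability obtained by iterating the time-1 transition kernel. -/
noncomputable def kiter {E : Type*} [MeasurableSpace E] (Q : Kernel E E) : ℕ → Kernel E E
  | 0 => Kernel.id
  | l + 1 => (kiter Q l) ∘ₖ Q

/-- The sequence `ζ` is a homogeneous Markov process on the filtered probability space
`(Ω, ℱ, P)` with time-1 transition probability (kernel) `Q`. -/
def IsMarkovWrt {Ω K : Type*} {mΩ : MeasurableSpace Ω} [MeasurableSpace K]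
    (P : Measure Ω) (ℱ : Filtration ℕ mΩ) (ζ : ℕ → Ω → K) (Q : Kernel K K) : Prop :=
  (∀ k, Measurable[ℱ k] (ζ k)) ∧
  ∀ (k : ℕ) (A : Set K), MeasurableSet A →
    (fun ω => ((Q (ζ k ω)) A).toReal)
      =ᵐ[P] P[fun ω => A.indicator (fun _ => (1 : ℝ)) (ζ (k + 1) ω)|ℱ k]

/-!
The pair `v_k = (u_k, η_k)` is a Markov chain on `X × K`, so it suffices to find a time `n` at
which its transition probabilities from all points of `X × K` dominate one nonzero measure `ν`
(Doeblin's condition): each block of `n` steps then contracts total variation by the factor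
`1 - ν(X × K)`, uniformly in the initial point.

Two steps of the chain started near the origin produce such a `ν`. By surjectivity of `D_u S` and
`D_η S` at `0`, the map sending two noise values `(z₁, z₂)` to the resulting `v₂` is a submersion
near `0`, hence the image of the minorising density of `(η₁, η₂)` dominates a nonzero measure that
does not depend on the starting point. The minorisation is propagated backwards along the noiseless
trajectory, which dissipativity brings close to `0`; strong recurrence first brings the noise
close to `0`.

The contraction makes the laws of the windows `(u_k, …, u_{k+m})` Cauchy in `k`. A weak limit of
the laws of the shifted processes on the compact set `X^ℤ` is the stationary measure, and
total variation bounds pass to weak limits.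
-/

open Filter Topology
open scoped ENNReal NNReal

section Iterates

variable {Z : Type*} [MeasurableSpace Z]

lemma kiter_add (T : Kernel Z Z) (a b : ℕ) : kiter T (a + b) = kiter T a ∘ₖ kiter T b := by
  induction b with
  | zero => simp only [kiter, add_zero, Kernel.comp_id]
  | succ b ih => rw [← add_assoc, kiter, ih, kiter, Kernel.comp_assoc]

lemma kiter_mul (T : Kernel Z Z) (n q : ℕ) : kiter T (n * q) = kiter (kiter T n) q := by
  induction q with
  | zero => rfl
  | succ q ih => rw [kiter, ← ih, Nat.mul_succ, kiter_add]

lemma kiter_one (T : Kernel Z Z) : kiter T 1 = T := Kernel.id_comp T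

instance isMarkovKernel_kiter (T : Kernel Z Z) [IsMarkovKernel T] (n : ℕ) :
    IsMarkovKernel (kiter T n) := by
  induction n with
  | zero => rw [kiter]; infer_instance
  | succ n ih => rw [kiter]; infer_instance

/-- A set `B` is absorbing for the kernel `T` if the chain with transition kernel `T` started
in `B` almost surely stays in `B`. -/
def IsAbsorbing (T : Kernel Z Z) (B : Set Z) : Prop :=
  ∀ v ∈ B, ∀ᵐ w ∂(T v), w ∈ B

namespace IsAbsorbing

variable {T : Kernel Z Z} {B : Set Z}

lemma ae_mem_bind (hT : IsAbsorbing T B) (hB : MeasurableSet B) {ρ : Measure Z}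
    (hρ : ∀ᵐ v ∂ρ, v ∈ B) : ∀ᵐ w ∂(ρ.bind T), w ∈ B :=
  Measure.ae_comp_of_ae_ae hB (hρ.mono hT)

protected lemma kiter (hT : IsAbsorbing T B) (hB : MeasurableSet B) (n : ℕ) :
    IsAbsorbing (kiter T n) B := by
  induction n with
  | zero =>
    intro v hv
    rw [kiter, Kernel.id_apply]
    exact (ae_dirac_iff hB).2 hv
  | succ n ih =>
    intro v hv
    rw [kiter, Kernel.comp_apply]
    exact ih.ae_mem_bind hB (hT v hv)

lemma smul_le_kiter_add (hT : IsAbsorbing T B) (hB : MeasurableSet B) {U : Set Z}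
    (hU : MeasurableSet U) {b κ : ℝ≥0∞} {ν : Measure Z} {M l : ℕ}
    (hν : ∀ w ∈ U ∩ B, b • ν ≤ kiter T M w) {v : Z} (hv : v ∈ B) (hκ : κ ≤ kiter T l v U) :
    (κ * b) • ν ≤ kiter T (M + l) v := by
  refine Measure.le_intro fun A hA _ => ?_
  have hmem : ∀ᵐ w ∂(kiter T l v).restrict U, w ∈ U ∩ B :=
    (ae_restrict_mem hU).and (ae_restrict_of_ae (hT.kiter hB l v hv))
  calc ((κ * b) • ν) A = κ * (b * ν A) := by
        rw [Measure.smul_apply, smul_eq_mul, mul_assoc]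
    _ ≤ ∫⁻ _ in U, b * ν A ∂(kiter T l v) := by
        rw [setLIntegral_const, mul_comm]; gcongr
    _ ≤ ∫⁻ w in U, kiter T M w A ∂(kiter T l v) :=
        lintegral_mono_ae (hmem.mono fun w hw => hν w hw A)
    _ ≤ ∫⁻ w, kiter T M w A ∂(kiter T l v) := setLIntegral_le_lintegral _ _
    _ = kiter T (M + l) v A := by rw [kiter_add, Kernel.comp_apply' _ _ _ hA]

end IsAbsorbing

end Iterates

section Doeblin

variable {Z : Type*} [MeasurableSpace Z] {T : Kernel Z Z} [IsMarkovKernel T] {B : Set Z}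

-- The two integrals share the part of the mass of `T v` that is carried by `ν`.
lemma IsAbsorbing.exists_lintegral_mem_Icc (hT : IsAbsorbing T B) {ν : Measure Z}
    (hν : ∀ v ∈ B, ν ≤ T v) {g : Z → ℝ≥0∞} {a e : ℝ≥0∞} (hg : ∀ w ∈ B, g w ∈ Icc a (a + e)) :
    ∃ a', ∀ v ∈ B, ∫⁻ w, g w ∂(T v) ∈ Icc a' (a' + (1 - ν univ) * e) := by
  refine ⟨a * (1 - ν univ) + ∫⁻ w, g w ∂ν, fun v hv => ?_⟩
  have : IsFiniteMeasure ν := isFiniteMeasure_of_le _ (hν v hv)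
  have hsplit : T v = (T v - ν) + ν := (Measure.sub_add_cancel_of_le (hν v hv)).symm
  have hmass : (T v - ν) univ = 1 - ν univ := by
    rw [Measure.sub_apply MeasurableSet.univ (hν v hv), measure_univ]
  have hmem : ∀ᵐ w ∂(T v - ν), g w ∈ Icc a (a + e) :=
    (Measure.absolutelyContinuous_of_le Measure.sub_le).ae_le ((hT v hv).mono hg)
  rw [hsplit, lintegral_add_measure]
  constructor
  · gcongr
    calc a * (1 - ν univ) = ∫⁻ _, a ∂(T v - ν) := by rw [lintegral_const, hmass]
      _ ≤ ∫⁻ w, g w ∂(T v - ν) := lintegral_mono_ae (hmem.mono fun _ h => h.1)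
  · rw [add_right_comm]
    gcongr
    calc ∫⁻ w, g w ∂(T v - ν) ≤ ∫⁻ _, (a + e) ∂(T v - ν) :=
          lintegral_mono_ae (hmem.mono fun _ h => h.2)
      _ = a * (1 - ν univ) + (1 - ν univ) * e := by rw [lintegral_const, hmass]; ring

lemma IsAbsorbing.exists_lintegral_kiter_mem_Icc (hT : IsAbsorbing T B) {ν : Measure Z}
    (hν : ∀ v ∈ B, ν ≤ T v) {g : Z → ℝ≥0∞} (hg : Measurable g) (hg1 : ∀ z, g z ≤ 1) (q : ℕ) :
    ∃ a, ∀ v ∈ B, ∫⁻ w, g w ∂(kiter T q v) ∈ Icc a (a + (1 - ν univ) ^ q) := by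
  induction q with
  | zero =>
    refine ⟨0, fun v _ => ⟨zero_le, ?_⟩⟩
    rw [kiter, Kernel.id_apply, lintegral_dirac' _ hg, pow_zero, zero_add]
    exact hg1 v
  | succ q ih =>
    obtain ⟨a, ha⟩ := ih
    obtain ⟨a', ha'⟩ := hT.exists_lintegral_mem_Icc hν ha
    refine ⟨a', fun v hv => ?_⟩
    rw [kiter, Kernel.lintegral_comp _ _ _ hg, pow_succ']
    exact ha' v hv

lemma IsAbsorbing.lintegral_bind_kiter_le (hT : IsAbsorbing T B) (hB : MeasurableSet B)
    {n : ℕ} {ν : Measure Z} (hν : ∀ v ∈ B, ν ≤ kiter T n v) {g : Z → ℝ≥0∞} (hg : Measurable g)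
    (hg1 : ∀ z, g z ≤ 1) {ρ σ : Measure Z} [IsProbabilityMeasure ρ] [IsProbabilityMeasure σ]
    (hρ : ∀ᵐ v ∂ρ, v ∈ B) (hσ : ∀ᵐ v ∂σ, v ∈ B) (k : ℕ) :
    ∫⁻ w, g w ∂(ρ.bind (kiter T k))
      ≤ ∫⁻ w, g w ∂(σ.bind (kiter T k)) + (1 - ν univ) ^ (k / n) := by
  obtain ⟨a, ha⟩ := (hT.kiter hB n).exists_lintegral_kiter_mem_Icc hν hg hg1 (k / n)
  have hk : kiter T k = kiter (kiter T n) (k / n) ∘ₖ kiter T (k % n) := by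
    rw [← kiter_mul, ← kiter_add, Nat.div_add_mod]
  have hmem {τ : Measure Z} (hτ : ∀ᵐ v ∂τ, v ∈ B) : ∀ᵐ v ∂(τ.bind (kiter T (k % n))),
      ∫⁻ w, g w ∂(kiter (kiter T n) (k / n) v) ∈ Icc a (a + (1 - ν univ) ^ (k / n)) :=
    ((hT.kiter hB _).ae_mem_bind hB hτ).mono ha
  have hbind (τ : Measure Z) : ∫⁻ w, g w ∂(τ.bind (kiter T k))
      = ∫⁻ v, ∫⁻ w, g w ∂(kiter (kiter T n) (k / n) v) ∂(τ.bind (kiter T (k % n))) := by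
    rw [hk, ← Measure.comp_assoc, Measure.lintegral_bind (Kernel.aemeasurable _) hg.aemeasurable]
  rw [hbind ρ, hbind σ]
  calc _ ≤ ∫⁻ _, (a + (1 - ν univ) ^ (k / n)) ∂(ρ.bind (kiter T (k % n))) :=
        lintegral_mono_ae ((hmem hρ).mono fun _ h => h.2)
    _ = ∫⁻ _, a ∂(σ.bind (kiter T (k % n))) + (1 - ν univ) ^ (k / n) := by
        simp only [lintegral_const, measure_univ, mul_one]
    _ ≤ _ := by
        gcongr ?_ + _
        exact lintegral_mono_ae ((hmem hσ).mono fun _ h => h.1)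

end Doeblin

section TotalVariation

variable {Y : Type*} [MeasurableSpace Y]

/-- `TVClose ε ρ σ` is the one-sided form of `‖ρ - σ‖_var ≤ ε`. For probability measures it is
symmetric, so it carries the same information as the total variation distance. -/
def TVClose (ε : ℝ≥0∞) (ρ σ : Measure Y) : Prop :=
  ∀ A, MeasurableSet A → ρ A ≤ σ A + ε

namespace TVClose

variable {ε : ℝ≥0∞} {ρ σ : Measure Y}

protected lemma symm [IsProbabilityMeasure ρ] [IsProbabilityMeasure σ] (h : TVClose ε ρ σ) :
    TVClose ε σ ρ := by
  intro A hA
  refine (ENNReal.add_le_add_iff_right (measure_ne_top ρ Aᶜ)).1 ?_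
  calc σ A + ρ Aᶜ ≤ σ A + (σ Aᶜ + ε) := by gcongr; exact h _ hA.compl
    _ = ρ A + ε + ρ Aᶜ := by
        rw [← add_assoc, prob_add_prob_compl hA, add_right_comm, prob_add_prob_compl hA]

protected lemma trans {δ : ℝ≥0∞} {τ : Measure Y} (h : TVClose ε ρ σ) (h' : TVClose δ σ τ) :
    TVClose (δ + ε) ρ τ := by
  intro A hA
  calc ρ A ≤ σ A + ε := h A hA
    _ ≤ τ A + δ + ε := by gcongr; exact h' A hA
    _ = τ A + (δ + ε) := add_assoc _ _ _

protected lemma map {Y' : Type*} [MeasurableSpace Y'] (h : TVClose ε ρ σ) {f : Y → Y'}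
    (hf : Measurable f) : TVClose ε (ρ.map f) (σ.map f) := by
  intro A hA
  rw [Measure.map_apply hf hA, Measure.map_apply hf hA]
  exact h _ (hf hA)

lemma eq_of_tendsto_zero [IsProbabilityMeasure ρ] [IsProbabilityMeasure σ] {ε : ℕ → ℝ≥0∞}
    (h : ∀ k, TVClose (ε k) ρ σ) (hε : Tendsto ε atTop (𝓝 0)) : ρ = σ := by
  have hle {ρ σ : Measure Y} (h : ∀ k, TVClose (ε k) ρ σ) : ρ ≤ σ :=
    Measure.le_intro fun A hA _ => by
      simpa using ge_of_tendsto' (tendsto_const_nhds.add hε) fun k => h k A hA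
  exact le_antisymm (hle h) (hle fun k => (h k).symm)

lemma abs_toReal_sub_le [IsProbabilityMeasure ρ] [IsProbabilityMeasure σ] (h : TVClose ε ρ σ)
    (hε : ε ≠ ⊤) {A : Set Y} (hA : MeasurableSet A) :
    |(ρ A).toReal - (σ A).toReal| ≤ ε.toReal :=
  abs_sub_le_iff.2
    ⟨sub_le_iff_le_add'.2 (ENNReal.toReal_le_add (h A hA) (measure_ne_top _ _) hε),
      sub_le_iff_le_add'.2 (ENNReal.toReal_le_add (h.symm A hA) (measure_ne_top _ _) hε)⟩

-- It suffices to compare open sets, and open sets satisfy the portmanteau inequality.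
lemma of_tendsto [TopologicalSpace Y] [OpensMeasurableSpace Y] [HasOuterApproxClosed Y]
    {ι : Type*} {l : Filter ι} [l.NeBot] {σs : ι → ProbabilityMeasure Y}
    {σ : ProbabilityMeasure Y} (hσs : Tendsto σs l (𝓝 σ)) {ρ : Measure Y} [ρ.OuterRegular]
    (h : ∀ᶠ i in l, TVClose ε (σs i : Measure Y) ρ) : TVClose ε (σ : Measure Y) ρ := by
  intro A _
  refine ENNReal.le_of_forall_pos_le_add fun δ hδ hfin => ?_
  have hρA : ρ A ≠ ⊤ := (le_self_add.trans_lt hfin).ne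
  obtain ⟨U, hAU, hU, hρU⟩ := A.exists_isOpen_lt_add hρA (ENNReal.coe_ne_zero.2 hδ.ne')
  calc (σ : Measure Y) A ≤ (σ : Measure Y) U := measure_mono hAU
    _ ≤ l.liminf fun i => (σs i : Measure Y) U :=
        ProbabilityMeasure.le_liminf_measure_open_of_tendsto hσs hU
    _ ≤ ρ U + ε := liminf_le_of_frequently_le' (h.mono fun i hi => hi U hU.measurableSet).frequently
    _ ≤ ρ A + ε + δ := by rw [add_right_comm]; gcongr

end TVClose

end TotalVariation

section StationaryLimit

lemma exists_tendsto_ultrafilter_of_isCompact {Y ι : Type*} [MeasurableSpace Y]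
    [TopologicalSpace Y] [T2Space Y] [BorelSpace Y] [HasOuterApproxClosed Y]
    {μs : ι → ProbabilityMeasure Y} {C : Set Y} (hC : IsCompact C)
    (hμs : ∀ i, (μs i : Measure Y) Cᶜ = 0) (F : Ultrafilter ι) :
    ∃ μ : ProbabilityMeasure Y, Tendsto μs F (𝓝 μ) ∧ (μ : Measure Y) Cᶜ = 0 := by
  have hcompact : IsCompact (closure (range μs)) := by
    refine isCompact_closure_of_isTightMeasureSet
      (isTightMeasureSet_iff_exists_isCompact_measure_compl_le.2 fun ε _ => ⟨C, hC, ?_⟩)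
    rintro _ ⟨_, ⟨i, rfl⟩, rfl⟩
    exact (hμs i).trans_le zero_le
  obtain ⟨μ, -, hμ⟩ := hcompact.ultrafilter_le_nhds' (F.map μs)
    (Ultrafilter.mem_map.2 (Filter.univ_mem' fun i => subset_closure ⟨i, rfl⟩))
  refine ⟨μ, hμ, le_zero_iff.1 ?_⟩
  calc (μ : Measure Y) Cᶜ ≤ (F : Filter ι).liminf fun i => (μs i : Measure Y) Cᶜ :=
        ProbabilityMeasure.le_liminf_measure_open_of_tendsto hμ hC.isClosed.isOpen_compl
    _ = 0 := by simp only [hμs, liminf_const]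

lemma ext_of_map_window {H : Type*} [MeasurableSpace H] {μ ν : Measure (ℤ → H)}
    [IsFiniteMeasure μ]
    (h : ∀ (a : ℤ) (m : ℕ), μ.map (fun f (i : Fin (m + 1)) => f (a + (i : ℕ)))
      = ν.map (fun f (i : Fin (m + 1)) => f (a + (i : ℕ)))) : μ = ν := by
  refine IsProjectiveLimit.unique (P := fun I => μ.map I.restrict) (fun I => rfl) fun I => ?_
  obtain ⟨N, hN⟩ : ∃ N : ℕ, ∀ i ∈ I, |i| ≤ N := by
    refine ⟨I.sup Int.natAbs, fun i hi => ?_⟩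
    rw [Int.abs_eq_natAbs]
    exact_mod_cast Finset.le_sup (f := Int.natAbs) hi
  let w : (ℤ → H) → Fin (2 * N + 1) → H := fun f i => f (-N + (i : ℕ))
  let r : (Fin (2 * N + 1) → H) → I → H := fun g i =>
    g ⟨((i : ℤ) + N).toNat, by have := abs_le.1 (hN i i.2); omega⟩
  have hr : Measurable r := by fun_prop
  have hw : Measurable w := by fun_prop
  have hfactor : (I.restrict : (ℤ → H) → I → H) = r ∘ w := by
    funext f i
    have := abs_le.1 (hN i i.2)
    simp only [Finset.restrict, r, w, Function.comp_apply]
    congr 1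
    omega
  change ν.map I.restrict = μ.map I.restrict
  rw [hfactor, ← Measure.map_map hr hw, ← Measure.map_map hr hw, h]

lemma map_shift_eq_self_of_map_window {H : Type*} [MeasurableSpace H] {μ : Measure (ℤ → H)}
    [IsFiniteMeasure μ]
    (h : ∀ (a : ℤ) (m : ℕ), μ.map (fun f (i : Fin (m + 1)) => f (a + (i : ℕ)))
      = μ.map (fun f (i : Fin (m + 1)) => f (a + 1 + (i : ℕ)))) :
    μ.map (fun f n => f (n + 1)) = μ := by
  refine (ext_of_map_window fun a m => ?_).symm
  rw [h, Measure.map_map (by fun_prop) (by fun_prop)]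
  congr 1
  funext f i
  simp only [Function.comp_apply, add_right_comm]

variable {H Ω : Type*} [MeasurableSpace H] {mΩ : MeasurableSpace Ω}

/-- The joint law of `u k, …, u (k + m)`. -/
noncomputable def windowLaw (P : Measure Ω) (u : ℕ → Ω → H) (k m : ℕ) :
    Measure (Fin (m + 1) → H) :=
  P.map fun ω i => u (k + i) ω

/-- The process `u` seen from time `k`, as a two-sided sequence; times before `0` are filled with
the initial value. -/
def recentre (u : ℕ → Ω → H) (k : ℕ) (ω : Ω) (i : ℤ) : H :=
  u (k + i).toNat ω

lemma measurable_recentre {u : ℕ → Ω → H} (hu : ∀ k, Measurable (u k)) (k : ℕ) :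
    Measurable (recentre u k) :=
  measurable_pi_lambda _ fun _ => hu _

variable {P : Measure Ω} [IsProbabilityMeasure P] {u : ℕ → Ω → H}

lemma isProbabilityMeasure_windowLaw (hu : ∀ k, Measurable (u k)) (k m : ℕ) :
    IsProbabilityMeasure (windowLaw P u k m) :=
  Measure.isProbabilityMeasure_map (measurable_pi_lambda _ fun _ => hu _).aemeasurable

variable [TopologicalSpace H] [TopologicalSpace.MetrizableSpace H] [SecondCountableTopology H]
  [BorelSpace H]

lemma tvClose_map_window_of_tendsto_recentre (hu : ∀ k, Measurable (u k)) {ε : ℝ≥0∞} {k m : ℕ}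
    (h : ∀ k', k ≤ k' → TVClose ε (windowLaw P u k' m) (windowLaw P u k m))
    {l : Filter ℕ} [l.NeBot] (hl : l ≤ atTop) {μs : ℕ → ProbabilityMeasure (ℤ → H)}
    (hμs : ∀ j, (μs j : Measure (ℤ → H)) = P.map (recentre u j))
    {μ : ProbabilityMeasure (ℤ → H)} (hμ : Tendsto μs l (𝓝 μ)) (a : ℤ) :
    TVClose ε ((μ : Measure (ℤ → H)).map fun f (i : Fin (m + 1)) => f (a + (i : ℕ)))
      (windowLaw P u k m) := by
  let w : (ℤ → H) → Fin (m + 1) → H := fun f i => f (a + (i : ℕ))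
  have hw : Continuous w := by fun_prop
  have := isProbabilityMeasure_windowLaw (P := P) hu k m
  have hlim := ProbabilityMeasure.tendsto_map_of_tendsto_of_continuous μs μ hμ hw
  refine TVClose.of_tendsto hlim (hl ?_)
  filter_upwards [eventually_ge_atTop (k + a.natAbs)] with j hj
  have hwindow : (μs j : Measure (ℤ → H)).map w = windowLaw P u (j + a).toNat m := by
    rw [hμs, Measure.map_map hw.measurable (measurable_recentre hu j), windowLaw]
    congr 1
    funext ω i
    simp only [w, recentre, Function.comp_apply]
    congr 1
    omega
  rw [ProbabilityMeasure.toMeasure_map, hwindow]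
  exact h _ (by omega)

theorem exists_stationary_limit (hu : ∀ k, Measurable (u k)) {X : Set H} (hX : IsCompact X)
    (huX : ∀ᵐ ω ∂P, ∀ k, u k ω ∈ X) {ε : ℕ → ℝ≥0∞} (hε : Tendsto ε atTop (𝓝 0))
    (h : ∀ m k k', k ≤ k' → TVClose (ε k) (windowLaw P u k' m) (windowLaw P u k m)) :
    ∃ μ : Measure (ℤ → H), IsProbabilityMeasure μ ∧ μ.map (fun f n => f (n + 1)) = μ ∧
      μ {f | ∀ n : ℤ, f n ∈ X} = 1 ∧
      ∀ m k, TVClose (ε k) (μ.map fun f (i : Fin (m + 1)) => f (i : ℕ)) (windowLaw P u k m) := by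
  let XZ : Set (ℤ → H) := Set.pi univ fun _ => X
  have hXZ : IsCompact XZ := isCompact_univ_pi fun _ => hX
  let μs : ℕ → ProbabilityMeasure (ℤ → H) := fun k => ⟨P.map (recentre u k),
    Measure.isProbabilityMeasure_map (measurable_recentre hu k).aemeasurable⟩
  have hμs (k : ℕ) : (μs k : Measure (ℤ → H)) XZᶜ = 0 := by
    change P.map (recentre u k) XZᶜ = 0
    rw [Measure.map_apply (measurable_recentre hu k) hXZ.measurableSet.compl]
    exact measure_eq_zero_iff_ae_notMem.2 (huX.mono fun ω hω h => h fun i _ => hω _)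
  obtain ⟨μ, hμ, hμX⟩ := exists_tendsto_ultrafilter_of_isCompact hXZ hμs (hyperfilter ℕ)
  have hwindow (a : ℤ) (m k : ℕ) :
      TVClose (ε k) ((μ : Measure (ℤ → H)).map fun f (i : Fin (m + 1)) => f (a + (i : ℕ)))
        (windowLaw P u k m) :=
    tvClose_map_window_of_tendsto_recentre hu (h m k)
      Nat.hyperfilter_le_atTop (fun _ => rfl) hμ a
  refine ⟨μ, inferInstance, ?_, ?_, fun m k => by simpa only [zero_add] using hwindow 0 m k⟩
  · refine map_shift_eq_self_of_map_window fun a m => ?_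
    have hprob (b : ℤ) : IsProbabilityMeasure
        ((μ : Measure (ℤ → H)).map fun f (i : Fin (m + 1)) => f (b + (i : ℕ))) :=
      Measure.isProbabilityMeasure_map (Measurable.aemeasurable (by fun_prop))
    have := isProbabilityMeasure_windowLaw (P := P) hu
    exact TVClose.eq_of_tendsto_zero (fun k => (hwindow a m k).trans (hwindow (a + 1) m k).symm)
      (by simpa only [add_zero] using hε.add hε)
  · have hset : {f : ℤ → H | ∀ n : ℤ, f n ∈ X} = XZ := by ext; simp [XZ]
    rw [hset, ← prob_compl_eq_zero_iff hXZ.measurableSet]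
    exact hμX

end StationaryLimit

section MarkovChain

lemma measurable_snoc {Z : Type*} [MeasurableSpace Z] (m : ℕ) :
    Measurable fun p : (Fin m → Z) × Z => (Fin.snoc p.1 p.2 : Fin (m + 1) → Z) := by
  refine measurable_pi_lambda _ fun i => ?_
  refine Fin.lastCases ?_ (fun j => ?_) i
  · simpa only [Fin.snoc_last] using measurable_snd
  · simpa only [Fin.snoc_castSucc] using measurable_fst.eval

/-- The law of the first `m + 1` values of the Markov chain with transition kernel `T`, as a
function of the initial value. -/
noncomputable def pathKernel {Z : Type*} [MeasurableSpace Z] (T : Kernel Z Z) :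
    (m : ℕ) → Kernel Z (Fin (m + 1) → Z)
  | 0 => Kernel.deterministic (fun z _ => z) (measurable_pi_lambda _ fun _ => measurable_id)
  | m + 1 => ((Kernel.id ×ₖ T.comap (fun f => f (Fin.last m)) (measurable_pi_apply _)).map
      fun p => Fin.snoc p.1 p.2) ∘ₖ pathKernel T m

instance isMarkovKernel_pathKernel {Z : Type*} [MeasurableSpace Z] (T : Kernel Z Z)
    [IsMarkovKernel T] (m : ℕ) : IsMarkovKernel (pathKernel T m) := by
  induction m with
  | zero => rw [pathKernel]; infer_instance
  | succ m ih =>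
    have := Kernel.IsMarkovKernel.map
      (Kernel.id ×ₖ T.comap (fun f : Fin (m + 1) → Z => f (Fin.last m)) (measurable_pi_apply _))
      (measurable_snoc (m + 1))
    rw [pathKernel]
    infer_instance

variable {Ω Z : Type*} {mΩ : MeasurableSpace Ω} [MeasurableSpace Z] {P : Measure Ω}
  {ℱ : Filtration ℕ mΩ} {ζ : ℕ → Ω → Z} {T : Kernel Z Z}

lemma IsMarkovWrt.measurable (h : IsMarkovWrt P ℱ ζ T) (k : ℕ) : Measurable (ζ k) :=
  (h.1 k).mono (ℱ.le k) le_rfl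

variable [IsProbabilityMeasure P] [IsMarkovKernel T]

lemma integrable_indicator_one_comp {A : Set Z} (hA : MeasurableSet A) {f : Ω → Z}
    (hf : Measurable f) :
    Integrable (fun ω => A.indicator (fun _ => (1 : ℝ)) (f ω)) P :=
  (integrable_const (1 : ℝ)).indicator (hf hA)

namespace IsMarkovWrt

lemma setLIntegral_eq (h : IsMarkovWrt P ℱ ζ T) (k : ℕ) {A : Set Z} (hA : MeasurableSet A)
    {s : Set Ω} (hs : MeasurableSet[ℱ k] s) :
    ∫⁻ ω in s, T (ζ k ω) A ∂P = P (s ∩ ζ (k + 1) ⁻¹' A) := by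
  have hm : Measurable fun ω => T (ζ k ω) A := (T.measurable_coe hA).comp (h.measurable k)
  have hint : ∫ ω in s, (T (ζ k ω) A).toReal ∂P = (P (s ∩ ζ (k + 1) ⁻¹' A)).toReal := by
    rw [setIntegral_congr_ae (ℱ.le k _ hs) ((h.2 k A hA).mono fun _ h _ => h),
      setIntegral_condExp (ℱ.le k) (integrable_indicator_one_comp hA (h.measurable _)) hs]
    change ∫ ω in s, (ζ (k + 1) ⁻¹' A).indicator (fun _ => (1 : ℝ)) ω ∂P = _
    rw [setIntegral_indicator (h.measurable _ hA), setIntegral_const, smul_eq_mul, mul_one,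
      Measure.real]
  rw [integral_toReal hm.aemeasurable (ae_of_all _ fun _ => measure_lt_top _ _)] at hint
  refine (ENNReal.toReal_eq_toReal_iff' (ne_of_lt ?_) (measure_ne_top _ _)).1 hint
  calc ∫⁻ ω in s, T (ζ k ω) A ∂P ≤ ∫⁻ _ in s, 1 ∂P := lintegral_mono fun _ => prob_le_one
    _ < ⊤ := by rw [setLIntegral_one]; exact measure_lt_top _ _

lemma of_setLIntegral_eq (hζ : ∀ k, Measurable[ℱ k] (ζ k))
    (h : ∀ k A, MeasurableSet A → ∀ s, MeasurableSet[ℱ k] s →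
      ∫⁻ ω in s, T (ζ k ω) A ∂P = P (s ∩ ζ (k + 1) ⁻¹' A)) : IsMarkovWrt P ℱ ζ T := by
  have hζ' (k : ℕ) : Measurable (ζ k) := (hζ k).mono (ℱ.le k) le_rfl
  refine ⟨hζ, fun k A hA => ?_⟩
  have hm : Measurable[ℱ k] fun ω => T (ζ k ω) A := (T.measurable_coe hA).comp (hζ k)
  have hint : Integrable (fun ω => (T (ζ k ω) A).toReal) P :=
    Integrable.of_bound (hm.mono (ℱ.le k) le_rfl).ennreal_toReal.aestronglyMeasurable 1
      (ae_of_all _ fun ω => by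
        rw [Real.norm_of_nonneg ENNReal.toReal_nonneg]
        exact ENNReal.toReal_le_of_le_ofReal zero_le_one (by simpa using prob_le_one))
  refine ae_eq_condExp_of_forall_setIntegral_eq (ℱ.le k) (integrable_indicator_one_comp hA (hζ' _))
    (fun _ _ _ => hint.integrableOn) (fun s hs _ => ?_)
    hm.ennreal_toReal.stronglyMeasurable.aestronglyMeasurable
  change _ = ∫ ω in s, (ζ (k + 1) ⁻¹' A).indicator (fun _ => (1 : ℝ)) ω ∂P
  rw [integral_toReal (hm.mono (ℱ.le k) le_rfl).aemeasurable
    (ae_of_all _ fun _ => measure_lt_top _ _), h k A hA s hs,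
    setIntegral_indicator (hζ' _ hA), setIntegral_const, smul_eq_mul, mul_one, Measure.real]

lemma map_restrict_prodMk_succ (h : IsMarkovWrt P ℱ ζ T) {k : ℕ} {W : Type*}
    [MeasurableSpace W] {Y : Ω → W} (hY : Measurable[ℱ k] Y) {π : W → Z} (hπ : Measurable π)
    (hπY : ∀ ω, π (Y ω) = ζ k ω) {s : Set Ω} (hs : MeasurableSet[ℱ k] s) :
    (P.restrict s).map (fun ω => (Y ω, ζ (k + 1) ω))
      = (P.restrict s).map Y ⊗ₘ T.comap π hπ := by
  have hY' : Measurable Y := hY.mono (ℱ.le k) le_rfl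
  refine Measure.ext_prod fun {B A} hB hA => ?_
  rw [Measure.map_apply (hY'.prodMk (h.measurable _)) (hB.prod hA),
    Measure.restrict_apply ((hY'.prodMk (h.measurable _)) (hB.prod hA)),
    Measure.compProd_apply_prod hB hA, setLIntegral_map hB (Kernel.measurable_coe _ hA) hY',
    Measure.restrict_restrict (hY' hB)]
  simp only [Kernel.comap_apply, hπY]
  rw [h.setLIntegral_eq k hA ((hY hB).inter hs)]
  congr 1
  ext ω
  simp only [mem_inter_iff, mem_preimage, mem_prod]
  tauto

lemma map_prodMk_succ (h : IsMarkovWrt P ℱ ζ T) {k : ℕ} {W : Type*}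
    [MeasurableSpace W] {Y : Ω → W} (hY : Measurable[ℱ k] Y) {π : W → Z} (hπ : Measurable π)
    (hπY : ∀ ω, π (Y ω) = ζ k ω) :
    P.map (fun ω => (Y ω, ζ (k + 1) ω)) = P.map Y ⊗ₘ T.comap π hπ := by
  simpa only [Measure.restrict_univ] using
    h.map_restrict_prodMk_succ hY hπ hπY MeasurableSet.univ

lemma map_succ (h : IsMarkovWrt P ℱ ζ T) (k : ℕ) : P.map (ζ (k + 1)) = (P.map (ζ k)).bind T := by
  have hjoint := congrArg Measure.snd
    (h.map_prodMk_succ (h.1 k) measurable_id fun _ => rfl)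
  rwa [Measure.snd_map_prodMk (h.measurable k), Kernel.comap_id, Measure.snd_compProd] at hjoint

lemma map_add (h : IsMarkovWrt P ℱ ζ T) (j k : ℕ) :
    P.map (ζ (j + k)) = (P.map (ζ j)).bind (kiter T k) := by
  induction k with
  | zero => exact Measure.id_comp.symm
  | succ k ih =>
    rw [← add_assoc, h.map_succ, ih, Measure.comp_assoc, add_comm k 1, kiter_add, kiter_one]

lemma ae_mem (h : IsMarkovWrt P ℱ ζ T) {B : Set Z} (hT : IsAbsorbing T B)
    (hB : MeasurableSet B) (h0 : ∀ᵐ ω ∂P, ζ 0 ω ∈ B) : ∀ᵐ ω ∂P, ∀ k, ζ k ω ∈ B := by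
  refine ae_all_iff.2 fun k => ae_of_ae_map (p := (· ∈ B)) (h.measurable k).aemeasurable ?_
  rw [← zero_add k, h.map_add 0 k]
  exact (hT.kiter hB k).ae_mem_bind hB ((ae_map_iff (h.measurable 0).aemeasurable hB).2 h0)

lemma windowLaw_eq (h : IsMarkovWrt P ℱ ζ T) (k m : ℕ) :
    windowLaw P ζ k m = (P.map (ζ k)).bind (pathKernel T m) := by
  induction m with
  | zero =>
    rw [pathKernel, Measure.deterministic_comp_eq_map, Measure.map_map (by fun_prop)
      (h.measurable k), windowLaw]
    congr 1
    funext ω i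
    rw [Fin.fin_one_eq_zero i]
    rfl
  | succ m ih =>
    have hwindow : Measurable[ℱ (k + m)] fun ω (i : Fin (m + 1)) => ζ (k + i) ω :=
      @measurable_pi_lambda _ _ _ (ℱ (k + m)) _ _ fun i =>
        (h.1 _).mono (ℱ.mono (by omega)) le_rfl
    have := isProbabilityMeasure_windowLaw (P := P) h.measurable k m
    have hjoint := h.map_prodMk_succ hwindow (measurable_pi_apply (Fin.last m)) fun _ => rfl
    rw [pathKernel, ← Measure.comp_assoc, ← ih, ← Measure.map_comp _ _ (measurable_snoc _),
      ← Measure.compProd_eq_comp_prod, windowLaw, windowLaw, ← hjoint, Measure.map_map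
        (measurable_snoc _) ((hwindow.mono (ℱ.le _) le_rfl).prodMk (h.measurable _))]
    congr 1
    funext ω i
    refine Fin.lastCases ?_ (fun j => ?_) i
    · simp only [Function.comp_apply, Fin.snoc_last, Fin.val_last, add_assoc]
    · simp only [Function.comp_apply, Fin.snoc_castSucc, Fin.val_castSucc]

lemma tvClose_windowLaw (h : IsMarkovWrt P ℱ ζ T) {ζ' : ℕ → Ω → Z}
    (h' : IsMarkovWrt P ℱ ζ' T) {B : Set Z} (hT : IsAbsorbing T B) (hB : MeasurableSet B)
    {n : ℕ} {ν : Measure Z} (hν : ∀ v ∈ B, ν ≤ kiter T n v) (h0 : ∀ᵐ ω ∂P, ζ 0 ω ∈ B)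
    (h0' : ∀ᵐ ω ∂P, ζ' 0 ω ∈ B) (m : ℕ) {k k' : ℕ} (hk : k ≤ k') :
    TVClose ((1 - ν univ) ^ (k / n)) (windowLaw P ζ k' m) (windowLaw P ζ' k m) := by
  intro A hA
  have hA1 (z : Z) : pathKernel T m z A ≤ 1 := prob_le_one
  have hmap : P.map (ζ k') = (P.map (ζ (k' - k))).bind (kiter T k) := by
    rw [← h.map_add, Nat.sub_add_cancel hk]
  have hmap' : P.map (ζ' k) = (P.map (ζ' 0)).bind (kiter T k) := by rw [← h'.map_add, zero_add]
  have := Measure.isProbabilityMeasure_map (μ := P) (h.measurable (k' - k)).aemeasurable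
  have := Measure.isProbabilityMeasure_map (μ := P) (h'.measurable 0).aemeasurable
  rw [h.windowLaw_eq, h'.windowLaw_eq, Measure.bind_apply hA (Kernel.aemeasurable _),
    Measure.bind_apply hA (Kernel.aemeasurable _), hmap, hmap']
  exact hT.lintegral_bind_kiter_le hB hν (Kernel.measurable_coe _ hA) hA1
    ((ae_map_iff (h.measurable _).aemeasurable hB).2
      ((h.ae_mem hT hB h0).mono fun _ hω => hω _))
    ((ae_map_iff (h'.measurable 0).aemeasurable hB).2 h0') k

end IsMarkovWrt

end MarkovChain

section RandomDynamicalSystem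

variable {H E : Type*} [MeasurableSpace H] [MeasurableSpace E] {S : H × E → H} {Q : Kernel E E}

/-- The transition kernel of the pair `(u_k, η_k)`: if `η` is a Markov process with kernel `Q` and
`u_k = S (u_{k-1}, η_k)`, then the pair is again a Markov process. -/
noncomputable def rdsKernel (S : H × E → H) (Q : Kernel E E) : Kernel (H × E) (H × E) :=
  (Kernel.id ×ₖ Q.comap Prod.snd measurable_snd).map fun p => (S (p.1.1, p.2), p.2)

lemma measurable_rds_step (hS : Measurable S) :
    Measurable fun p : (H × E) × E => (S (p.1.1, p.2), p.2) := by
  fun_prop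

lemma rdsKernel_apply (hS : Measurable S) [IsSFiniteKernel Q] (v : H × E) :
    rdsKernel S Q v = (Q v.2).map fun z => (S (v.1, z), z) := by
  rw [rdsKernel, Kernel.map_apply _ (measurable_rds_step hS), Kernel.prod_apply, Kernel.id_apply,
    Kernel.comap_apply, Measure.dirac_prod,
    Measure.map_map (measurable_rds_step hS) measurable_prodMk_left]
  rfl

lemma isMarkovKernel_rdsKernel (hS : Measurable S) [IsMarkovKernel Q] :
    IsMarkovKernel (rdsKernel S Q) :=
  Kernel.IsMarkovKernel.map _ (measurable_rds_step hS)

lemma isAbsorbing_rdsKernel (hS : Measurable S) [IsSFiniteKernel Q] {X : Set H} {K : Set E}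
    (hX : MeasurableSet X) (hK : MeasurableSet K) (hinv : ∀ u ∈ X, ∀ z ∈ K, S (u, z) ∈ X)
    (hQ : IsAbsorbing Q K) : IsAbsorbing (rdsKernel S Q) (X ×ˢ K) := by
  intro v hv
  rw [rdsKernel_apply hS]
  refine (ae_map_iff (Measurable.aemeasurable (by fun_prop)) (hX.prod hK)).2 ?_
  filter_upwards [hQ v.2 hv.2] with z hz
  exact ⟨hinv _ hv.1 z hz, hz⟩

lemma kiter_rdsKernel_map_snd (hS : Measurable S) [IsMarkovKernel Q] (n : ℕ) (v : H × E) :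
    (kiter (rdsKernel S Q) n v).map Prod.snd = kiter Q n v.2 := by
  have := isMarkovKernel_rdsKernel hS (Q := Q)
  induction n generalizing v with
  | zero => rw [kiter, kiter, Kernel.id_apply, Kernel.id_apply, Measure.map_dirac' measurable_snd]
  | succ n ih =>
    ext A hA
    rw [kiter, kiter, Measure.map_apply measurable_snd hA,
      Kernel.comp_apply' _ _ _ (measurable_snd hA), Kernel.comp_apply' _ _ _ hA,
      rdsKernel_apply hS, lintegral_map (Kernel.measurable_coe _ (measurable_snd hA))
        (by fun_prop)]
    refine lintegral_congr fun z => ?_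
    rw [← ih (S (v.1, z), z), Measure.map_apply measurable_snd hA]

variable {Ω : Type*} {mΩ : MeasurableSpace Ω} {ℱ : Filtration ℕ mΩ} {η : ℕ → Ω → E}

lemma measurable_traj_of_adapted (hS : Measurable S) (hη : ∀ k, Measurable[ℱ k] (η k)) (u₀ : H)
    (k : ℕ) : Measurable[ℱ k] fun ω => traj S u₀ (fun j => η j ω) k := by
  induction k with
  | zero => exact measurable_const
  | succ k ih => exact hS.comp ((ih.mono (ℱ.mono (Nat.le_succ k)) le_rfl).prodMk (hη (k + 1)))

lemma IsMarkovWrt.measurable_traj {P : Measure Ω} (hη : IsMarkovWrt P ℱ η Q)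
    (hS : Measurable S) (u₀ : H) (k : ℕ) : Measurable fun ω => traj S u₀ (fun j => η j ω) k :=
  (measurable_traj_of_adapted hS hη.1 u₀ k).mono (ℱ.le k) le_rfl

lemma IsMarkovWrt.traj_prodMk {P : Measure Ω} [IsProbabilityMeasure P] [IsMarkovKernel Q]
    (hη : IsMarkovWrt P ℱ η Q) (hS : Measurable S) (u₀ : H) :
    IsMarkovWrt P ℱ (fun k ω => (traj S u₀ (fun j => η j ω) k, η k ω)) (rdsKernel S Q) := by
  have := isMarkovKernel_rdsKernel hS (Q := Q)
  have hpair (k : ℕ) : Measurable[ℱ k] fun ω => (traj S u₀ (fun j => η j ω) k, η k ω) :=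
    (measurable_traj_of_adapted hS hη.1 u₀ k).prodMk (hη.1 k)
  refine IsMarkovWrt.of_setLIntegral_eq hpair fun k A hA s hs => ?_
  have hA' := measurable_rds_step hS hA
  have hpair' := (hpair k).mono (ℱ.le k) le_rfl
  have hjoint := congrArg (· ((fun p : (H × E) × E => (S (p.1.1, p.2), p.2)) ⁻¹' A))
    (hη.map_restrict_prodMk_succ (hpair k) measurable_snd (fun _ => rfl) hs)
  simp only [Measure.map_apply (hpair'.prodMk (hη.measurable (k + 1))) hA',
    Measure.compProd_apply hA'] at hjoint
  rw [lintegral_map (Kernel.measurable_kernel_prodMk_left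
    (κ := Q.comap Prod.snd measurable_snd) hA') hpair'] at hjoint
  rw [inter_comm, ← Measure.restrict_apply
    (((hpair (k + 1)).mono (ℱ.le _) le_rfl) hA)]
  refine Eq.trans (lintegral_congr fun ω => ?_) hjoint.symm
  rw [rdsKernel_apply hS, Measure.map_apply (by fun_prop) hA, Kernel.comap_apply]
  rfl

end RandomDynamicalSystem

section Submersion

variable {E H : Type*} [NormedAddCommGroup E] [NormedSpace ℝ E]
  [NormedAddCommGroup H] [NormedSpace ℝ H]

lemma approximatesLinearOn_add_comp_sub {g : E → H} {L : E →L[ℝ] H} {s : Set E} {c : ℝ≥0}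
    (hg : ApproximatesLinearOn g L s c) (R : H →L[ℝ] E) :
    ApproximatesLinearOn (fun z => z + R (g z - L z)) (.id ℝ E) s (‖R‖₊ * c) := by
  intro x hx y hy
  calc ‖x + R (g x - L x) - (y + R (g y - L y)) - ContinuousLinearMap.id ℝ E (x - y)‖
      = ‖R (g x - g y - L (x - y))‖ := by
        simp only [map_sub, ContinuousLinearMap.id_apply]
        abel_nf
    _ ≤ ‖R‖ * (c * ‖x - y‖) := R.le_opNorm_of_le (hg x hx y hy)
    _ = (‖R‖₊ * c : ℝ≥0) * ‖x - y‖ := by push_cast; rw [mul_assoc]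

lemma approximatesLinearOn_comp_prodMk {F : Type*} [NormedAddCommGroup F] [NormedSpace ℝ F]
    {G : F × E → H} {G' : F × E →L[ℝ] H} {s : Set (F × E)} {c : ℝ≥0}
    (hG : ApproximatesLinearOn G G' s c) {t : Set E} {p : F} (ht : ∀ z ∈ t, (p, z) ∈ s) :
    ApproximatesLinearOn (fun z => G (p, z)) (G'.comp (.inr ℝ F E)) t c := by
  intro x hx y hy
  simpa using hG _ (ht x hx) _ (ht y hy)

variable [FiniteDimensional ℝ E] [MeasurableSpace E] [BorelSpace E] (μ : Measure E)
  [μ.IsAddHaarMeasure]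

lemma eventually_addHaar_ball_inter_le : ∀ᶠ ε in 𝓝[>] (0 : ℝ≥0), ∀ (Φ : E → E) (b : ℝ),
    ApproximatesLinearOn Φ (.id ℝ E) (closedBall 0 b) ε → ‖Φ 0‖ ≤ b / 4 →
    ∀ A, μ (ball 0 (b / 4) ∩ A) ≤ 2 * μ (closedBall 0 b ∩ Φ ⁻¹' A) := by
  have hdet : ENNReal.ofReal |(ContinuousLinearMap.id ℝ E).det| < (2 : ℝ≥0) := by
    simp [ContinuousLinearMap.det]
  filter_upwards [addHaar_image_le_mul_of_det_lt μ _ hdet,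
    nhdsWithin_le_nhds (Iio_mem_nhds (show (0 : ℝ≥0) < 1 / 2 by norm_num))]
    with ε himage hε Φ b hΦ hΦ0 A
  have hb : 0 ≤ b := by linarith [norm_nonneg (Φ 0)]
  have hε' : (ε : ℝ) < 1 / 2 := by exact_mod_cast hε
  let inv : (ContinuousLinearMap.id ℝ E).NonlinearRightInverse :=
    ⟨id, 1, fun y => by simp, fun _ => rfl⟩
  have hsurj : SurjOn Φ (closedBall 0 b) (closedBall (Φ 0) ((1 - ε) * b)) := by
    simpa [inv] using hΦ.surjOn_closedBall_of_nonlinearRightInverse inv hb subset_rfl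
  have hsub : ball 0 (b / 4) ∩ A ⊆ Φ '' (closedBall 0 b ∩ Φ ⁻¹' A) := by
    rintro x ⟨hx, hxA⟩
    have hx' : x ∈ closedBall (Φ 0) ((1 - ε) * b) := by
      rw [mem_ball_zero_iff] at hx
      rw [mem_closedBall, dist_eq_norm]
      nlinarith [norm_sub_le x (Φ 0)]
    obtain ⟨z, hz, rfl⟩ := hsurj hx'
    exact mem_image_of_mem Φ ⟨hz, hxA⟩
  calc μ (ball 0 (b / 4) ∩ A) ≤ μ (Φ '' (closedBall 0 b ∩ Φ ⁻¹' A)) := measure_mono hsub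
    _ ≤ 2 * μ (closedBall 0 b ∩ Φ ⁻¹' A) := himage _ _ (hΦ.mono_set inter_subset_left)

-- With `R` a right inverse of `L = ∂_z G (0, 0)`, the map `Φ z = z + R (G (p, z) - L z)` is close
-- to the identity and satisfies `L (Φ z) = G (p, z)`.
lemma exists_addHaar_ball_inter_preimage_le [FiniteDimensional ℝ H]
    {F : Type*} [NormedAddCommGroup F] [NormedSpace ℝ F] {G : F × E → H} {G' : F × E →L[ℝ] H}
    (hG : HasStrictFDerivAt G G' 0) (hG0 : G 0 = 0)
    (hsurj : Function.Surjective (G'.comp (.inr ℝ F E))) {δ : ℝ} (hδ : 0 < δ) :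
    ∃ δ' > 0, ∀ᶠ p in 𝓝 (0 : F), ∀ A : Set H,
      μ (ball 0 δ' ∩ G'.comp (.inr ℝ F E) ⁻¹' A)
        ≤ 2 * μ (ball 0 δ ∩ (fun z => G (p, z)) ⁻¹' A) := by
  set L : E →L[ℝ] H := G'.comp (.inr ℝ F E)
  obtain ⟨R, hR⟩ := L.exists_rightInverse_of_surjective (LinearMap.range_eq_top.2 hsurj)
  obtain ⟨ε, hε, hε0⟩ :=
    ((eventually_addHaar_ball_inter_le μ).and self_mem_nhdsWithin).exists
  have hc0 : 0 < ε / (‖R‖₊ + 1) := div_pos hε0 (by positivity)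
  have hRc : ‖R‖₊ * (ε / (‖R‖₊ + 1)) ≤ ε := by
    rw [mul_div_assoc']
    exact div_le_of_le_mul₀ (by positivity) (by positivity) (by rw [mul_comm]; gcongr; simp)
  obtain ⟨s, hs, happrox⟩ := hG.approximates_deriv_on_nhds (Or.inr hc0)
  obtain ⟨a, ha, has⟩ := Metric.mem_nhds_iff.1 hs
  obtain ⟨b, hb0, hb⟩ := exists_between (lt_min ha hδ)
  have hΦ0 : Tendsto (fun p : F => ‖R (G (p, 0))‖) (𝓝 0) (𝓝 0) := by
    have hcont : ContinuousAt (fun p : F => ‖R (G (p, 0))‖) 0 :=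
      (R.continuous.continuousAt.comp (hG.continuousAt.comp
        (f := fun p : F => (p, (0 : E))) (by fun_prop))).norm
    simpa [ContinuousAt, ← Prod.zero_eq_mk, hG0] using hcont
  refine ⟨b / 4, by positivity, ?_⟩
  filter_upwards [hΦ0 (Iic_mem_nhds (show 0 < b / 4 by positivity)), ball_mem_nhds 0 ha]
    with p hp0 hpa A
  have hmem : ∀ z ∈ closedBall (0 : E) b, (p, z) ∈ s := fun z hz => has <| by
    rw [← Prod.mk_zero_zero, ← ball_prod_same]
    exact ⟨hpa, closedBall_subset_ball (hb.trans_le (min_le_left _ _)) hz⟩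
  have hLΦ (z : E) : L (z + R (G (p, z) - L z)) = G (p, z) := by
    have hLR (x : H) : L (R x) = x := DFunLike.congr_fun hR x
    rw [map_add, hLR, add_sub_cancel]
  calc μ (ball 0 (b / 4) ∩ L ⁻¹' A)
      ≤ 2 * μ (closedBall 0 b ∩ (fun z => z + R (G (p, z) - L z)) ⁻¹' (L ⁻¹' A)) :=
        hε _ b ((approximatesLinearOn_add_comp_sub
          (approximatesLinearOn_comp_prodMk happrox hmem) R).mono_num hRc) (by
          rwa [map_zero, sub_zero, zero_add]) _
    _ ≤ 2 * μ (ball 0 δ ∩ (fun z => G (p, z)) ⁻¹' A) := by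
        simp only [← preimage_comp, Function.comp_def, hLΦ]
        gcongr
        exact closedBall_subset_ball (hb.trans_le (min_le_right _ _))

end Submersion

section TwoSteps

lemma map_prod_le_smul_map_prod {Y W V : Type*} [MeasurableSpace Y] [MeasurableSpace W]
    [MeasurableSpace V] {μ μ' : Measure Y} {ρ : Measure W} [SFinite μ] [SFinite μ'] [SFinite ρ]
    {f g : Y × W → V} (hf : Measurable f) (hg : Measurable g) {C : ℝ≥0∞}
    (h : ∀ᵐ w ∂ρ, ∀ A : Set V, μ {y | f (y, w) ∈ A} ≤ C * μ' {y | g (y, w) ∈ A}) :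
    (μ.prod ρ).map (fun q => (f q, q.2)) ≤ C • (μ'.prod ρ).map (fun q => (g q, q.2)) := by
  refine Measure.le_intro fun A hA _ => ?_
  have hf' : Measurable fun q => (f q, q.2) := hf.prodMk measurable_snd
  have hg' : Measurable fun q => (g q, q.2) := hg.prodMk measurable_snd
  rw [Measure.smul_apply, smul_eq_mul, Measure.map_apply hf' hA, Measure.map_apply hg' hA,
    Measure.prod_apply_symm (hf' hA), Measure.prod_apply_symm (hg' hA),
    ← lintegral_const_mul _ (measurable_measure_prodMk_right (hg' hA))]
  exact lintegral_mono_ae (h.mono fun w hw => hw {x | (x, w) ∈ A})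

lemma smul_map_prod_le_kiter_rdsKernel_two {H E : Type*} [MeasurableSpace H] [MeasurableSpace E]
    {S : H × E → H} {Q : Kernel E E} [IsMarkovKernel Q] (hS : Measurable S) {lam : Measure E}
    [SFinite lam] {c : ℝ≥0∞} {v : H × E} (hv : c • lam ≤ Q v.2)
    (hlam : ∀ᵐ z ∂(c • lam), c • lam ≤ Q z) :
    (c * c) • (lam.prod lam).map (fun q => (S (S (v.1, q.1), q.2), q.2))
      ≤ kiter (rdsKernel S Q) 2 v := by
  refine Measure.le_intro fun A hA _ => ?_
  have hstep : Measurable fun q : E × E => (S (S (v.1, q.1), q.2), q.2) := by fun_prop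
  have hmap : Measurable fun z => (S (v.1, z), z) := by fun_prop
  calc ((c * c) • (lam.prod lam).map (fun q => (S (S (v.1, q.1), q.2), q.2))) A
      = ∫⁻ z₁, (c • lam) {z₂ | (S (S (v.1, z₁), z₂), z₂) ∈ A} ∂(c • lam) := by
        simp only [Measure.smul_apply, smul_eq_mul, Measure.map_apply hstep hA,
          Measure.prod_apply (hstep hA), lintegral_smul_measure, mul_assoc]
        rw [← lintegral_const_mul _ (measurable_measure_prodMk_left (hstep hA))]
        rfl
    _ ≤ ∫⁻ z₁, Q z₁ {z₂ | (S (S (v.1, z₁), z₂), z₂) ∈ A} ∂(c • lam) :=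
        lintegral_mono_ae (hlam.mono fun z hz => hz _)
    _ ≤ ∫⁻ z₁, Q z₁ {z₂ | (S (S (v.1, z₁), z₂), z₂) ∈ A} ∂(Q v.2) := lintegral_mono' hv le_rfl
    _ = ∫⁻ z₁, rdsKernel S Q (S (v.1, z₁), z₁) A ∂(Q v.2) := by
        refine lintegral_congr fun z₁ => ?_
        rw [rdsKernel_apply hS, Measure.map_apply (by fun_prop) hA]
        rfl
    _ = kiter (rdsKernel S Q) 2 v A := by
        rw [kiter, kiter_one, Kernel.comp_apply' _ _ _ hA, rdsKernel_apply hS,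
          lintegral_map (Kernel.measurable_coe _ hA) hmap]

lemma exists_hasStrictFDerivAt_two_steps {H E : Type*} [NormedAddCommGroup H] [NormedSpace ℝ H]
    [NormedAddCommGroup E] [NormedSpace ℝ E] {S : H × E → H} {S' : H × E →L[ℝ] H}
    (hS' : HasStrictFDerivAt S S' 0) (hS0 : S 0 = 0)
    (hE : Function.Surjective (S'.comp (.inr ℝ H E)))
    (hH : Function.Surjective (S'.comp (.inl ℝ H E))) :
    ∃ G' : (H × E) × E →L[ℝ] H,
      HasStrictFDerivAt (fun q : (H × E) × E => S (S (q.1.1, q.2), q.1.2)) G' 0 ∧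
      Function.Surjective (G'.comp (.inr ℝ (H × E) E)) := by
  let inner : (H × E) × E →L[ℝ] H × E := (.fst ℝ H E ∘L .fst ℝ (H × E) E).prod (.snd ℝ (H × E) E)
  let param : (H × E) × E →L[ℝ] E := .snd ℝ H E ∘L .fst ℝ (H × E) E
  have hinner : HasStrictFDerivAt (fun q => S (inner q)) (S' ∘L inner) 0 :=
    HasStrictFDerivAt.comp 0 (by rwa [map_zero]) inner.hasStrictFDerivAt
  have houter : HasStrictFDerivAt S S' (S (inner 0), param 0) := by
    rwa [map_zero, hS0, map_zero, Prod.mk_zero_zero]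
  refine ⟨S' ∘L (S' ∘L inner).prod param, houter.comp (f := fun q => (S (inner q), param q)) 0
    (hinner.prodMk param.hasStrictFDerivAt), ?_⟩
  convert hH.comp hE using 1
  ext z
  simp [inner, param]

end TwoSteps

section Minorisation

/-- `T` satisfies a minorisation condition near `z`, relative to `B`: its transition probabilities
from the points of `B` close to `z` dominate a common positive multiple of `ν`. -/
def MinorisedNear {Z : Type*} [MeasurableSpace Z] [TopologicalSpace Z] (T : Kernel Z Z)
    (B : Set Z) (ν : Measure Z) (z : Z) : Prop :=
  ∃ b : ℝ≥0∞, b ≠ 0 ∧ ∀ᶠ v in 𝓝[B] z, b • ν ≤ T v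

lemma minorisedNear_of_density {E : Type*} [NormedAddCommGroup E] [MeasurableSpace E]
    [OpensMeasurableSpace E] {ℓ : Measure E} {Q : Kernel E E} {K : Set E} {ρ : E → E → ℝ}
    (hρ : ContinuousAt (fun p : E × E => ρ p.1 p.2) 0) (hρ0 : 0 < ρ 0 0)
    (hQ : ∀ᶠ y in 𝓝[K] 0, ∀ A, MeasurableSet A → ∫⁻ z in A, ENNReal.ofReal (ρ y z) ∂ℓ ≤ Q y A) :
    ∃ r > 0, MinorisedNear Q K (ℓ.restrict (ball 0 r)) 0 := by
  obtain ⟨r, hr, hball⟩ := Metric.eventually_nhds_iff_ball.1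
    (hρ.eventually (lt_mem_nhds (half_lt_self hρ0)))
  refine ⟨r, hr, ENNReal.ofReal (ρ 0 0 / 2), by simpa using hρ0, ?_⟩
  filter_upwards [hQ, nhdsWithin_le_nhds (ball_mem_nhds 0 hr)] with y hy hyr
  refine Measure.le_intro fun A hA _ => ?_
  rw [Measure.smul_apply, smul_eq_mul, Measure.restrict_apply hA]
  calc ENNReal.ofReal (ρ 0 0 / 2) * ℓ (A ∩ ball 0 r)
      = ∫⁻ _ in A ∩ ball 0 r, ENNReal.ofReal (ρ 0 0 / 2) ∂ℓ := by rw [setLIntegral_const]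
    _ ≤ ∫⁻ z in A ∩ ball 0 r, ENNReal.ofReal (ρ y z) ∂ℓ := by
        refine setLIntegral_mono' (hA.inter measurableSet_ball) fun z hz => ?_
        refine ENNReal.ofReal_le_ofReal (hball (y, z) ?_).le
        rw [← Prod.mk_zero_zero, ← ball_prod_same]
        exact ⟨hyr, hz.2⟩
    _ ≤ ∫⁻ z in A, ENNReal.ofReal (ρ y z) ∂ℓ := lintegral_mono_set inter_subset_left
    _ ≤ Q y A := hy A hA

lemma MinorisedNear.exists_ball {E : Type*} [NormedAddCommGroup E] [MeasurableSpace E]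
    {ℓ : Measure E} {Q : Kernel E E} {K : Set E} {r : ℝ} (hr : 0 < r)
    (hQ : MinorisedNear Q K (ℓ.restrict (ball 0 r)) 0) :
    ∃ δ > 0, ∃ c : ℝ≥0∞, c ≠ 0 ∧ ∀ y ∈ ball 0 δ ∩ K, c • ℓ.restrict (ball 0 δ) ≤ Q y := by
  obtain ⟨c, hc, hev⟩ := hQ
  obtain ⟨ε, hε, hball⟩ := Metric.mem_nhdsWithin_iff.1 hev
  refine ⟨min ε r, lt_min hε hr, c, hc, fun y hy => ?_⟩
  calc c • ℓ.restrict (ball 0 (min ε r)) ≤ c • ℓ.restrict (ball 0 r) := by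
        gcongr
        exact min_le_right ε r
    _ ≤ Q y := hball ⟨ball_subset_ball (min_le_left _ _) hy.1, hy.2⟩

section TwoStepMinorisation

variable {H E : Type*} [NormedAddCommGroup H] [NormedSpace ℝ H] [FiniteDimensional ℝ H]
  [MeasurableSpace H] [BorelSpace H] [NormedAddCommGroup E] [NormedSpace ℝ E]
  [FiniteDimensional ℝ E] [MeasurableSpace E] [BorelSpace E] {ℓ : Measure E} [ℓ.IsAddHaarMeasure]

lemma exists_measure_le_map_prod {G : (H × E) × E → H} {G' : (H × E) × E →L[ℝ] H}
    (hG : Measurable G) (hG' : HasStrictFDerivAt G G' 0) (hG0 : G 0 = 0)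
    (hsurj : Function.Surjective (G'.comp (.inr ℝ (H × E) E))) {δ : ℝ} (hδ : 0 < δ) :
    ∃ ν : Measure (H × E), ν univ ≠ 0 ∧ ∀ᶠ u in 𝓝 (0 : H),
      ν ≤ (2 : ℝ≥0∞) • ((ℓ.restrict (ball 0 δ)).prod (ℓ.restrict (ball 0 δ))).map
        fun q => (G ((u, q.2), q.1), q.2) := by
  set L : E →L[ℝ] H := G'.comp (.inr ℝ (H × E) E)
  obtain ⟨δ', hδ', himage⟩ := exists_addHaar_ball_inter_preimage_le ℓ hG' hG0 hsurj hδ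
  obtain ⟨a, ha, hball⟩ := Metric.eventually_nhds_iff_ball.1 himage
  have hmin : 0 < min a δ := lt_min ha hδ
  have hL : Measurable fun q : E × E => L q.1 := L.measurable.comp measurable_fst
  refine ⟨((ℓ.restrict (ball 0 δ')).prod (ℓ.restrict (ball 0 (min a δ)))).map
    fun q => (L q.1, q.2), ?_, ?_⟩
  · rw [Measure.map_apply (hL.prodMk measurable_snd) MeasurableSet.univ, preimage_univ,
      ← univ_prod_univ, Measure.prod_prod, Measure.restrict_apply_univ,
      Measure.restrict_apply_univ]
    exact mul_ne_zero (measure_ball_pos ℓ 0 hδ').ne' (measure_ball_pos ℓ 0 hmin).ne'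
  · filter_upwards [ball_mem_nhds 0 ha] with u hu
    have hGu : Measurable fun q : E × E => G ((u, q.2), q.1) := by fun_prop
    calc _ ≤ (2 : ℝ≥0∞) • ((ℓ.restrict (ball 0 δ)).prod (ℓ.restrict (ball 0 (min a δ)))).map
          fun q => (G ((u, q.2), q.1), q.2) := by
          refine map_prod_le_smul_map_prod hL hGu ?_
          filter_upwards [ae_restrict_mem measurableSet_ball] with z hz A
          rw [Measure.restrict_apply' measurableSet_ball, Measure.restrict_apply'
            measurableSet_ball, inter_comm, inter_comm _ (ball 0 δ)]
          refine hball (u, z) ?_ A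
          rw [← Prod.mk_zero_zero, ← ball_prod_same]
          exact ⟨hu, ball_subset_ball (min_le_left _ _) hz⟩
      _ ≤ _ := by
          gcongr
          · exact hGu.prodMk measurable_snd
          · exact min_le_right a δ

-- In `(u, z₁, z₂) ↦ (S (S (u, z₁), z₂), z₂)` the variable `z₁` spreads the law of the first
-- component while `z₂` supplies the second one; a single step could not do both.
lemma MinorisedNear.exists_kiter_rdsKernel_two {S : H × E → H} {S' : H × E →L[ℝ] H}
    {Q : Kernel E E} [IsMarkovKernel Q] {K : Set E} {r : ℝ} (hr : 0 < r)
    (hQmin : MinorisedNear Q K (ℓ.restrict (ball 0 r)) 0) (hQ : IsAbsorbing Q K)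
    (hSm : Measurable S) (hS' : HasStrictFDerivAt S S' 0) (hS0 : S 0 = 0)
    (hE : Function.Surjective (S'.comp (.inr ℝ H E)))
    (hH : Function.Surjective (S'.comp (.inl ℝ H E))) (X : Set H) :
    ∃ ν : Measure (H × E), ν univ ≠ 0 ∧
      MinorisedNear (kiter (rdsKernel S Q) 2) (X ×ˢ K) ν 0 := by
  obtain ⟨δ, hδ, c, hc, hlow⟩ := hQmin.exists_ball hr
  obtain ⟨G', hG', hG'surj⟩ := exists_hasStrictFDerivAt_two_steps hS' hS0 hE hH
  obtain ⟨ν, hν, hev⟩ := exists_measure_le_map_prod (ℓ := ℓ) (by fun_prop) hG'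
    (by simp only [Prod.fst_zero, Prod.snd_zero, Prod.mk_zero_zero, hS0]) hG'surj hδ
  refine ⟨ν, hν, c * c / 2, ?_, ?_⟩
  · simp [ENNReal.div_eq_zero_iff, hc]
  filter_upwards [self_mem_nhdsWithin, nhdsWithin_le_nhds (hev.prod_inl_nhds (0 : E)),
    nhdsWithin_le_nhds (ball_mem_nhds (0 : H × E) hδ)] with v hvK hv hvδ
  rw [← Prod.mk_zero_zero, ← ball_prod_same] at hvδ
  have hv2 : c • ℓ.restrict (ball 0 δ) ≤ Q v.2 := hlow v.2 ⟨hvδ.2, hvK.2⟩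
  have hmem : ∀ᵐ z ∂(c • ℓ.restrict (ball 0 δ)), z ∈ ball 0 δ ∩ K :=
    (Measure.ae_smul_measure (ae_restrict_mem measurableSet_ball) c).and
      (ae_mono hv2 (hQ v.2 hvK.2))
  calc (c * c / 2) • ν
      ≤ (c * c / 2) • ((2 : ℝ≥0∞) • ((ℓ.restrict (ball 0 δ)).prod (ℓ.restrict (ball 0 δ))).map
          fun q => (S (S (v.1, q.1), q.2), q.2)) := by gcongr
    _ = (c * c) • ((ℓ.restrict (ball 0 δ)).prod (ℓ.restrict (ball 0 δ))).map
          fun q => (S (S (v.1, q.1), q.2), q.2) := by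
        rw [smul_smul, ENNReal.div_mul_cancel two_ne_zero ENNReal.ofNat_ne_top]
    _ ≤ kiter (rdsKernel S Q) 2 v :=
        smul_map_prod_le_kiter_rdsKernel_two hSm hv2 (hmem.mono hlow)

end TwoStepMinorisation

end Minorisation

section Propagation

lemma exists_smul_le_of_isCompact {H E : Type*} [MeasurableSpace H] [TopologicalSpace H]
    [MeasurableSpace E] [TopologicalSpace E] {T : Kernel (H × E) (H × E)} {X : Set H} {K : Set E}
    {ν : Measure (H × E)} (hX : IsCompact X) {y₀ : E}
    (h : ∀ u ∈ X, MinorisedNear T (X ×ˢ K) ν (u, y₀)) :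
    ∃ b : ℝ≥0∞, b ≠ 0 ∧ ∀ᶠ y in 𝓝[K] y₀, ∀ u ∈ X, b • ν ≤ T (u, y) := by
  refine hX.induction_on (p := fun s => ∃ b : ℝ≥0∞, b ≠ 0 ∧
    ∀ᶠ y in 𝓝[K] y₀, ∀ u ∈ s, b • ν ≤ T (u, y)) ⟨1, one_ne_zero, by simp⟩ ?_ ?_ ?_
  · rintro s t hst ⟨b, hb, hev⟩
    exact ⟨b, hb, hev.mono fun y hy u hu => hy u (hst hu)⟩
  · rintro s t ⟨b, hb, hs⟩ ⟨b', hb', ht⟩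
    have hmin {a : ℝ≥0∞} (ha : min b b' ≤ a) : min b b' • ν ≤ a • ν := by gcongr
    refine ⟨min b b', (lt_min (pos_iff_ne_zero.2 hb) (pos_iff_ne_zero.2 hb')).ne', ?_⟩
    filter_upwards [hs, ht] with y hys hyt u hu
    exact hu.elim (fun hu => (hmin (min_le_left _ _)).trans (hys u hu))
      (fun hu => (hmin (min_le_right _ _)).trans (hyt u hu))
  · intro u hu
    obtain ⟨b, hb, hev⟩ := h u hu
    rw [nhdsWithin_prod_eq] at hev
    obtain ⟨V, hV, W, hW, hVW⟩ := Filter.eventually_prod_iff.1 hev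
    exact ⟨{x | V x}, hV, b, hb, hW.mono fun y hy x hx => hVW hx hy⟩

variable {H E : Type*} [MeasurableSpace H] [TopologicalSpace H] [BorelSpace H]
  [NormedAddCommGroup E] [MeasurableSpace E] [BorelSpace E] [SecondCountableTopology E]
  {ℓ : Measure E} [ℓ.IsOpenPosMeasure] {S : H × E → H} {Q : Kernel E E} [IsMarkovKernel Q]
  {X : Set H} {K : Set E} {ν : Measure (H × E)}

lemma MinorisedNear.kiter_rdsKernel_succ {r : ℝ} (hr : 0 < r)
    (hQmin : MinorisedNear Q K (ℓ.restrict (ball 0 r)) 0) (hS : Continuous S)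
    (hTB : IsAbsorbing (rdsKernel S Q) (X ×ˢ K)) (hXK : MeasurableSet (X ×ˢ K)) {M : ℕ} {u : H}
    (h : MinorisedNear (kiter (rdsKernel S Q) M) (X ×ˢ K) ν (S (u, 0), 0)) :
    MinorisedNear (kiter (rdsKernel S Q) (M + 1)) (X ×ˢ K) ν (u, 0) := by
  obtain ⟨b, hb, hev⟩ := h
  obtain ⟨c, hc, hQc⟩ := hQmin
  obtain ⟨U, hU, hmemU, hUb⟩ := mem_nhdsWithin.1 hev
  have hnear : ∀ᶠ q : (H × E) × E in 𝓝 (u, 0) ×ˢ 𝓝 0, (S (q.1.1, q.2), q.2) ∈ U := by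
    rw [← nhds_prod_eq]
    exact ContinuousAt.eventually_mem (by fun_prop) (hU.mem_nhds hmemU)
  obtain ⟨V, hV, W, hW, hVW⟩ := Filter.eventually_prod_iff.1 hnear
  obtain ⟨δ, hδ, hWδ⟩ := Metric.eventually_nhds_iff_ball.1 hW
  have hδr : 0 < min δ r := lt_min hδ hr
  refine ⟨c * ℓ (ball 0 (min δ r)) * b,
    mul_ne_zero (mul_ne_zero hc (measure_ball_pos ℓ 0 hδr).ne') hb, ?_⟩
  have hQv : ∀ᶠ v in 𝓝[X ×ˢ K] (u, (0 : E)), c • ℓ.restrict (ball 0 r) ≤ Q v.2 := by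
    rw [nhdsWithin_prod_eq]
    exact hQc.prod_inr _
  filter_upwards [self_mem_nhdsWithin, nhdsWithin_le_nhds hV, hQv] with v hvXK hvV hvQ
  refine hTB.smul_le_kiter_add hXK hU.measurableSet (fun w hw => hUb hw) hvXK ?_
  have hSm : Measurable S := hS.measurable
  rw [kiter_one, rdsKernel_apply hSm, Measure.map_apply (by fun_prop) hU.measurableSet]
  calc c * ℓ (ball 0 (min δ r)) = (c • ℓ.restrict (ball 0 r)) (ball 0 (min δ r)) := by
        rw [Measure.smul_apply, smul_eq_mul, Measure.restrict_apply measurableSet_ball,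
          inter_eq_left.2 (ball_subset_ball (min_le_right δ r))]
    _ ≤ Q v.2 (ball 0 (min δ r)) := hvQ _
    _ ≤ Q v.2 ((fun z => (S (v.1, z), z)) ⁻¹' U) :=
        measure_mono fun z hz => hVW hvV (hWδ z (ball_subset_ball (min_le_left δ r) hz))

lemma MinorisedNear.kiter_rdsKernel_of_traj {r : ℝ} (hr : 0 < r)
    (hQmin : MinorisedNear Q K (ℓ.restrict (ball 0 r)) 0) (hS : Continuous S)
    (hTB : IsAbsorbing (rdsKernel S Q) (X ×ˢ K)) (hXK : MeasurableSet (X ×ˢ K)) {M N : ℕ} {u : H}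
    (h : MinorisedNear (kiter (rdsKernel S Q) M) (X ×ˢ K) ν (traj S u (fun _ => 0) N, 0)) :
    MinorisedNear (kiter (rdsKernel S Q) (M + N)) (X ×ˢ K) ν (u, 0) := by
  induction N generalizing M with
  | zero => exact h
  | succ N ih =>
    rw [Nat.add_comm N 1, ← Nat.add_assoc]
    exact ih (hQmin.kiter_rdsKernel_succ hr hS hTB hXK h)

end Propagation

lemma exists_doeblin_minorisation {H E : Type*}
    [NormedAddCommGroup H] [NormedSpace ℝ H] [FiniteDimensional ℝ H]
    [MeasurableSpace H] [BorelSpace H]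
    [NormedAddCommGroup E] [NormedSpace ℝ E] [FiniteDimensional ℝ E]
    [MeasurableSpace E] [BorelSpace E] {ℓ : Measure E} [ℓ.IsAddHaarMeasure]
    {X : Set H} {K : Set E} (hX : IsCompact X) (hK : MeasurableSet K)
    {S : H × E → H} {S' : H × E →L[ℝ] H} (hS : Continuous S)
    (hS' : HasStrictFDerivAt S S' 0) (hS0 : S 0 = 0) (hinv : ∀ u ∈ X, ∀ z ∈ K, S (u, z) ∈ X)
    (hdiss : ∀ ε > 0, ∃ n, ∀ u ∈ X, ‖traj S u (fun _ => 0) n‖ ≤ ε)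
    (hE : Function.Surjective (S'.comp (.inr ℝ H E)))
    (hH : Function.Surjective (S'.comp (.inl ℝ H E)))
    {Q : Kernel E E} [IsMarkovKernel Q] (hQ : IsAbsorbing Q K)
    (hQmin : ∃ r > 0, MinorisedNear Q K (ℓ.restrict (ball 0 r)) 0)
    (hrec : ∀ δ > 0, ∃ l, ∃ κ > 0, ∀ y ∈ K, κ ≤ kiter Q l y (ball 0 δ)) :
    ∃ n ν, n ≠ 0 ∧ ν univ ≠ 0 ∧ ∀ v ∈ X ×ˢ K, ν ≤ kiter (rdsKernel S Q) n v := by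
  obtain ⟨r, hr, hQmin⟩ := hQmin
  have hXK : MeasurableSet (X ×ˢ K) := hX.measurableSet.prod hK
  have hTB : IsAbsorbing (rdsKernel S Q) (X ×ˢ K) :=
    isAbsorbing_rdsKernel hS.measurable hX.measurableSet hK hinv hQ
  obtain ⟨ν, hν, b₀, hb₀, hev⟩ :=
    hQmin.exists_kiter_rdsKernel_two hr hQ hS.measurable hS' hS0 hE hH X
  obtain ⟨ε, hε, hball⟩ := Metric.eventually_nhds_iff_ball.1
    (eventually_nhds_nhdsWithin.2 hev)
  obtain ⟨N, hN⟩ := hdiss (ε / 2) (by positivity)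
  have hnear : ∀ u ∈ X, MinorisedNear (kiter (rdsKernel S Q) (2 + N)) (X ×ˢ K) ν (u, 0) := by
    refine fun u hu => hQmin.kiter_rdsKernel_of_traj hr hS hTB hXK ⟨b₀, hb₀, hball _ ?_⟩
    rw [← Prod.mk_zero_zero, ← ball_prod_same]
    exact ⟨mem_ball_zero_iff.2 ((hN u hu).trans_lt (half_lt_self hε)), mem_ball_self hε⟩
  obtain ⟨b, hb, hevK⟩ := exists_smul_le_of_isCompact hX hnear
  obtain ⟨δ, hδ, hδK⟩ := Metric.mem_nhdsWithin_iff.1 hevK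
  obtain ⟨l, κ, hκ, hl⟩ := hrec δ hδ
  refine ⟨2 + N + l, (κ * b) • ν, by lia, ?_, fun v hv => ?_⟩
  · rw [Measure.smul_apply, smul_eq_mul]
    exact mul_ne_zero (mul_ne_zero hκ.ne' hb) hν
  · refine hTB.smul_le_kiter_add hXK (measurable_snd (measurableSet_ball (x := 0) (ε := δ)))
      (fun w hw => hδK ⟨hw.1, hw.2.2⟩ w.1 hw.2.1) hv ?_
    rw [← Measure.map_apply measurable_snd measurableSet_ball,
      kiter_rdsKernel_map_snd hS.measurable]
    exact hl v.2 hv.2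

lemma exists_toReal_pow_div_le_exp {θ : ℝ≥0∞} (hθ : θ < 1) {n : ℕ} (hn : n ≠ 0) :
    ∃ γ > 0, ∃ C > 0, ∀ k : ℕ, (θ ^ (k / n)).toReal ≤ C * Real.exp (-γ * k) := by
  -- The maximum with `1 / 2` makes the base of the logarithm positive when `θ = 0`.
  obtain ⟨t, ht0, ht1, hθt⟩ : ∃ t : ℝ, 0 < t ∧ t < 1 ∧ θ.toReal ≤ t :=
    ⟨max θ.toReal (1 / 2), by positivity, max_lt (ENNReal.toReal_lt_of_lt_ofReal (by simpa))
      (by norm_num), le_max_left _ _⟩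
  have hlog : 0 < -Real.log t := neg_pos.2 (Real.log_neg ht0 ht1)
  refine ⟨-Real.log t / n, by positivity, t⁻¹, by positivity, fun k => ?_⟩
  have hdiv : (k : ℝ) / n - 1 ≤ (k / n : ℕ) := by
    have h := (Nat.lt_floor_add_one ((k : ℝ) / n)).le
    rw [Nat.floor_div_eq_div] at h
    linarith
  calc (θ ^ (k / n)).toReal = θ.toReal ^ (k / n) := ENNReal.toReal_pow _ _
    _ ≤ t ^ (k / n) := by gcongr
    _ = t ^ ((k / n : ℕ) : ℝ) := (Real.rpow_natCast _ _).symm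
    _ ≤ t ^ ((k : ℝ) / n - 1) := Real.rpow_le_rpow_of_exponent_ge ht0 ht1.le hdiv
    _ = t⁻¹ * Real.exp (-(-Real.log t / n) * k) := by
        rw [Real.rpow_sub_one ht0.ne', Real.rpow_def_of_pos ht0, div_eq_inv_mul]
        congr 2
        ring

section StationaryLaw

variable {H E Ω : Type*} [MeasurableSpace H] [MeasurableSpace E] {mΩ : MeasurableSpace Ω}
  {P : Measure Ω} [IsProbabilityMeasure P] {ℱ : Filtration ℕ mΩ} {S : H × E → H}
  {Q : Kernel E E} [IsMarkovKernel Q] {η : ℕ → Ω → E} {X : Set H} {K : Set E}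

lemma IsMarkovWrt.tvClose_windowLaw_traj (hη : IsMarkovWrt P ℱ η Q) (hS : Measurable S)
    (hXK : IsAbsorbing (rdsKernel S Q) (X ×ˢ K)) (hX : MeasurableSet X) (hK : MeasurableSet K)
    {n : ℕ} {ν : Measure (H × E)} (hν : ∀ v ∈ X ×ˢ K, ν ≤ kiter (rdsKernel S Q) n v)
    (h0 : ∀ᵐ ω ∂P, η 0 ω ∈ K) {u v : H} (hu : u ∈ X) (hv : v ∈ X) (m : ℕ) {k k' : ℕ}
    (hk : k ≤ k') :
    TVClose ((1 - ν univ) ^ (k / n))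
      (windowLaw P (fun j ω => traj S u (fun i => η i ω) j) k' m)
      (windowLaw P (fun j ω => traj S v (fun i => η i ω) j) k m) := by
  have := isMarkovKernel_rdsKernel (Q := Q) hS
  have hpair := (hη.traj_prodMk hS u).tvClose_windowLaw (hη.traj_prodMk hS v) hXK (hX.prod hK) hν
    (h0.mono fun _ hω => ⟨hu, hω⟩) (h0.mono fun _ hω => ⟨hv, hω⟩) m hk
  have hfst : Measurable fun (f : Fin (m + 1) → H × E) i => (f i).1 := by fun_prop
  have hwindow (w : H) (j : ℕ) : windowLaw P (fun j ω => traj S w (fun i => η i ω) j) j m =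
      (windowLaw P (fun j ω => (traj S w (fun i => η i ω) j, η j ω)) j m).map
        fun f i => (f i).1 := by
    rw [windowLaw, windowLaw, Measure.map_map hfst
      (measurable_pi_lambda _ fun _ => (hη.traj_prodMk hS w).measurable _)]
    rfl
  rw [hwindow, hwindow]
  exact hpair.map hfst

lemma IsMarkovWrt.exists_stationary_law_of_minorisation [TopologicalSpace H]
    [TopologicalSpace.MetrizableSpace H] [SecondCountableTopology H] [BorelSpace H]
    (hη : IsMarkovWrt P ℱ η Q) (hS : Measurable S) (hX : IsCompact X) (hXne : X.Nonempty)
    (hK : MeasurableSet K) (hXK : IsAbsorbing (rdsKernel S Q) (X ×ˢ K)) {n : ℕ} (hn : n ≠ 0)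
    {ν : Measure (H × E)} (hν0 : ν univ ≠ 0)
    (hν : ∀ v ∈ X ×ˢ K, ν ≤ kiter (rdsKernel S Q) n v) (h0 : ∀ᵐ ω ∂P, η 0 ω ∈ K) :
    ∃ μ : Measure (ℤ → H), IsProbabilityMeasure μ ∧ μ.map (fun f n => f (n + 1)) = μ ∧
      μ {f | ∀ n : ℤ, f n ∈ X} = 1 ∧
      ∀ m, ∀ u ∈ X, ∀ k, ∀ Γ : Set (Fin (m + 1) → H), MeasurableSet Γ →
        |(windowLaw P (fun j ω => traj S u (fun i => η i ω) j) k m Γ).toReal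
            - (μ.map (fun f (i : Fin (m + 1)) => f (i : ℕ)) Γ).toReal|
          ≤ 2 * ((1 - ν univ) ^ (k / n)).toReal := by
  obtain ⟨u₀, hu₀⟩ := hXne
  have := isMarkovKernel_rdsKernel (Q := Q) hS
  have htv {u v : H} (hu : u ∈ X) (hv : v ∈ X) (m : ℕ) {k k' : ℕ} (hk : k ≤ k') :=
    hη.tvClose_windowLaw_traj hS hXK hX.measurableSet hK hν h0 hu hv m hk
  have hmem : ∀ᵐ ω ∂P, ∀ k, traj S u₀ (fun i => η i ω) k ∈ X :=
    ((hη.traj_prodMk hS u₀).ae_mem hXK (hX.measurableSet.prod hK)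
      (h0.mono fun _ hω => ⟨hu₀, hω⟩)).mono fun _ h k => (h k).1
  have hθ : 1 - ν univ < 1 := ENNReal.sub_lt_self ENNReal.one_ne_top one_ne_zero hν0
  have htraj (u : H) := hη.measurable_traj hS u
  obtain ⟨μ, hμ, hshift, hμX, hclose⟩ := exists_stationary_limit (htraj u₀) hX hmem
    ((ENNReal.tendsto_pow_atTop_nhds_zero_of_lt_one hθ).comp (Nat.tendsto_div_const_atTop hn))
    fun m _ _ hk => htv hu₀ hu₀ m hk
  refine ⟨μ, hμ, hshift, hμX, fun m u hu k Γ hΓ => ?_⟩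
  have := isProbabilityMeasure_windowLaw (P := P) (htraj u) k m
  have := isProbabilityMeasure_windowLaw (P := P) (htraj u₀) k m
  have : IsProbabilityMeasure (μ.map fun f (i : Fin (m + 1)) => f (i : ℕ)) :=
    Measure.isProbabilityMeasure_map
      (measurable_pi_lambda _ fun _ => measurable_pi_apply _).aemeasurable
  have hfin : (1 - ν univ) ^ (k / n) ≠ ⊤ := ENNReal.pow_ne_top hθ.ne_top
  rw [two_mul, ← ENNReal.toReal_add hfin hfin]
  exact ((htv hu hu₀ m le_rfl).trans (hclose m k).symm).abs_toReal_sub_le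
    (ENNReal.add_ne_top.2 ⟨hfin, hfin⟩) hΓ

end StationaryLaw

theorem exponential_mixing_markovian_noise_general {H E : Type*}
    [NormedAddCommGroup H] [NormedSpace ℝ H] [FiniteDimensional ℝ H]
    [MeasurableSpace H] [BorelSpace H]
    [NormedAddCommGroup E] [NormedSpace ℝ E] [FiniteDimensional ℝ E]
    [MeasurableSpace E] [BorelSpace E] {ℓ : Measure E} [ℓ.IsAddHaarMeasure]
    {X : Set H} {K : Set E} (hX : IsCompact X) (hXne : X.Nonempty) (hK : MeasurableSet K)
    {S : H × E → H} {S' : H × E →L[ℝ] H} (hS : Continuous S)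
    (hS' : HasStrictFDerivAt S S' 0) (hS0 : S 0 = 0) (hinv : ∀ u ∈ X, ∀ z ∈ K, S (u, z) ∈ X)
    (hdiss : ∀ ε > 0, ∃ n, ∀ u ∈ X, ‖traj S u (fun _ => 0) n‖ ≤ ε)
    (hE : Function.Surjective (S'.comp (.inr ℝ H E)))
    (hH : Function.Surjective (S'.comp (.inl ℝ H E)))
    {Q : Kernel E E} [IsMarkovKernel Q] (hQ : IsAbsorbing Q K)
    (hQmin : ∃ r > 0, MinorisedNear Q K (ℓ.restrict (ball 0 r)) 0)
    (hrec : ∀ δ > 0, ∃ l, ∃ κ > 0, ∀ y ∈ K, κ ≤ kiter Q l y (ball 0 δ))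
    {Ω : Type*} {mΩ : MeasurableSpace Ω} {P : Measure Ω} [IsProbabilityMeasure P]
    {ℱ : Filtration ℕ mΩ} {η : ℕ → Ω → E} (hη : IsMarkovWrt P ℱ η Q)
    (h0 : ∀ᵐ ω ∂P, η 0 ω ∈ K) :
    ∃ (μ : Measure (ℤ → H)) (γ : ℝ), IsProbabilityMeasure μ ∧ 0 < γ ∧
      μ.map (fun f n => f (n + 1)) = μ ∧ μ {f | ∀ n : ℤ, f n ∈ X} = 1 ∧
      ∃ C > 0, ∀ m, ∀ u ∈ X, ∀ k, ∀ Γ : Set (Fin (m + 1) → H), MeasurableSet Γ →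
        |(P.map (fun ω (i : Fin (m + 1)) => traj S u (fun j => η j ω) (k + i)) Γ).toReal
            - (μ.map (fun f (i : Fin (m + 1)) => f (i : ℕ)) Γ).toReal|
          ≤ C * Real.exp (-γ * k) := by
  obtain ⟨n, ν, hn, hν0, hν⟩ :=
    exists_doeblin_minorisation hX hK hS hS' hS0 hinv hdiss hE hH hQ hQmin hrec
  have hθ : 1 - ν univ < 1 := ENNReal.sub_lt_self ENNReal.one_ne_top one_ne_zero hν0
  obtain ⟨γ, hγ, C, hC, hrate⟩ := exists_toReal_pow_div_le_exp hθ hn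
  obtain ⟨μ, hμ, hshift, hμX, hclose⟩ := hη.exists_stationary_law_of_minorisation hS.measurable
    hX hXne hK (isAbsorbing_rdsKernel hS.measurable hX.measurableSet hK hinv hQ) hn hν0 hν h0
  refine ⟨μ, γ, hμ, hγ, hshift, hμX, 2 * C, by positivity, fun m u hu k Γ hΓ => ?_⟩
  calc _ ≤ 2 * ((1 - ν univ) ^ (k / n)).toReal := hclose m u hu k Γ hΓ
    _ ≤ 2 * C * Real.exp (-γ * k) := by rw [mul_assoc]; gcongr; exact hrate k

/-- **Theorem 1.1 (exponential mixing in total variation for RDS driven by a Markovian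
noise)**.  Let `H`, `E` be finite-dimensional Euclidean spaces, `X ⊂ H`, `K ⊂ E` compact sets
containing the origins, and `S : H × E → H` a `C²`-smooth map with `S(0,0) = 0` and
`S(X × K) ⊂ X` satisfying the Dissipativity and Controllability hypotheses.  Let `η` be a
Markov process in `E` with a Feller transition probability `Q` whose initial law and transition
measures are supported in `K`, satisfying the Minorisation and Strong recurrence hypotheses.
Then there are a shift-invariant measure `μ` on `X^ℤ` and a number `γ > 0` such that for every
`m ≥ 0` there exists `C_m > 0`, independent of the initial state `u₀ ∈ X`, with
`‖D([u_k, …, u_{k+m}]) − μ_m‖_var ≤ C_m e^{−γ k}` for all `k ≥ 0`. -/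
theorem exponential_mixing_markovian_noise
    {H E : Type*}
    [NormedAddCommGroup H] [InnerProductSpace ℝ H] [FiniteDimensional ℝ H]
    [MeasurableSpace H] [BorelSpace H]
    [NormedAddCommGroup E] [InnerProductSpace ℝ E] [FiniteDimensional ℝ E]
    [MeasureSpace E] [BorelSpace E] [(volume : Measure E).IsAddHaarMeasure]
    (X : Set H) (K : Set E) (hX : IsCompact X) (hK : IsCompact K)
    (h0X : (0 : H) ∈ X) (h0K : (0 : E) ∈ K)
    (S : H × E → H) (hS : ContDiff ℝ 2 S) (hS0 : S (0, 0) = 0)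
    (hinv : ∀ u ∈ X, ∀ η ∈ K, S (u, η) ∈ X)
    -- Dissipativity
    (hdiss : ∀ ε > 0, ∃ n : ℕ, 1 ≤ n ∧ ∀ u ∈ X, ‖traj S u (fun _ => 0) n‖ ≤ ε)
    -- Controllability
    (hsurj : Function.Surjective ((fderiv ℝ S (0, 0)).comp (ContinuousLinearMap.inr ℝ H E)))
    (hiso : Function.Bijective ((fderiv ℝ S (0, 0)).comp (ContinuousLinearMap.inl ℝ H E)))
    -- the Markovian noise
    (Q : Kernel E E) [IsMarkovKernel Q]
    (hFeller : ∀ f : BoundedContinuousFunction E ℝ, Continuous fun y => ∫ z, f z ∂(Q y))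
    (hsuppQ : ∀ y ∈ K, Q y Kᶜ = 0)
    -- Minorisation
    (hminor : ∃ r > 0, ∃ ρ : E → E → ℝ,
      (∀ y z, 0 ≤ ρ y z) ∧ (∃ Cb : ℝ, ∀ y z, ρ y z ≤ Cb) ∧
      ContinuousOn (fun p : E × E => ρ p.1 p.2) (closedBall 0 r ×ˢ univ) ∧
      0 < ρ 0 0 ∧
      ∀ y ∈ K ∩ closedBall 0 r, ∀ A : Set E, MeasurableSet A →
        ∫⁻ z in A, ENNReal.ofReal (ρ y z) ≤ Q y A)
    -- Strong recurrence
    (hrec : ∀ δ > 0, ∃ l : ℕ, 1 ≤ l ∧ ∃ κ > 0, ∀ y ∈ K,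
      ENNReal.ofReal κ ≤ (kiter Q l) y (ball 0 δ))
    -- the Markov process η
    {Ω : Type*} {mΩ : MeasurableSpace Ω} (P : Measure Ω) [IsProbabilityMeasure P]
    (ℱ : Filtration ℕ mΩ)
    (η : ℕ → Ω → E) (hη : IsMarkovWrt P ℱ η Q)
    (hsupp0 : ∀ᵐ ω ∂P, η 0 ω ∈ K) :
    ∃ (μ : Measure (ℤ → H)) (γ : ℝ), IsProbabilityMeasure μ ∧ 0 < γ ∧
      -- μ is a translation-invariant measure on X^ℤ
      μ.map (fun f n => f (n + 1)) = μ ∧ μ {f | ∀ n : ℤ, f n ∈ X} = 1 ∧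
      ∀ m : ℕ, ∃ C > 0, ∀ u₀ ∈ X, ∀ k : ℕ,
        ∀ Γ : Set (Fin (m + 1) → H), MeasurableSet Γ →
          |(P.map (fun ω => fun i : Fin (m + 1) =>
              traj S u₀ (fun j => η j ω) (k + i)) Γ).toReal
            - (μ.map (fun f => fun i : Fin (m + 1) => f (i : ℕ)) Γ).toReal|
          ≤ C * Real.exp (-γ * k) := by
  have hminor₀ : ∃ r > 0, MinorisedNear Q K (volume.restrict (ball 0 r)) 0 := by
    obtain ⟨r, hr, ρ, -, -, hcont, hρ0, hle⟩ := hminor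
    refine minorisedNear_of_density
      (hcont.continuousAt (prod_mem_nhds (closedBall_mem_nhds 0 hr) univ_mem)) hρ0 ?_
    filter_upwards [self_mem_nhdsWithin, mem_nhdsWithin_of_mem_nhds (closedBall_mem_nhds 0 hr)]
      with y hyK hyr using hle y ⟨hyK, hyr⟩
  obtain ⟨μ, γ, hμ, hγ, hshift, hμX, C, hC, hmix⟩ :=
    exponential_mixing_markovian_noise_general hX ⟨0, h0X⟩ hK.measurableSet hS.continuous
      (hS.contDiffAt.hasStrictFDerivAt two_ne_zero) hS0 hinv
      (fun ε hε => (hdiss ε hε).imp fun _ h => h.2) hsurj hiso.2 hsuppQ hminor₀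
      (fun δ hδ => let ⟨l, _, κ, hκ, hl⟩ := hrec δ hδ
        ⟨l, ENNReal.ofReal κ, ENNReal.ofReal_pos.2 hκ, hl⟩) hη hsupp0
  exact ⟨μ, γ, hμ, hγ, hshift, hμX, fun m => ⟨C, hC, hmix m⟩⟩
end

section
/- Let H and E be finite-dimensional Euclidean spaces, X ⊂ H and K ⊂ E compact sets containing the origins, and S: H × E → H a C²-smooth map with S(0,0) = 0 and S(X × K) ⊂ X. Assume the map D_η S(0,0): E → H is surjective and D_u S(0,0): H → H is an isomorphism. Let S₂(v; z₁, z₂) = S(S(v, z₁), z₂). Then there exist a subspace F ⊂ E with dim F = dim H, with orthogonal complement F^⊥, and a number α > 0 such that for every (v, z₁⁻, z₂) ∈ B̄_H(α) × B̄_{F^⊥}(α) × B̄_E(α), the C¹-smooth map B_F(α) ∋ z₁⁺ ↦ S₂(v; z₁⁺ + z₁⁻, z₂) ∈ H is a diffeomorphism onto its image, and it can be extended to a global diffeomorphism Φ(·; v, z₁⁻, z₂) from F onto H. -/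
open Set Metric

open scoped NNReal Manifold

/-!
The restriction of `D_η S(0,0)` to `F = (ker D_η S(0,0))ᗮ` is an isomorphism onto `H`, and by the
chain rule so is the derivative `L = D_u S(0,0) ∘ D_η S(0,0)|_F` of `z₁⁺ ↦ S₂(0; z₁⁺, 0)` at `0`.
Strict differentiability makes `z₁⁺ ↦ S₂(v; z₁⁺ + z₁⁻, z₂)` differ from `L` by a map with small
Lipschitz constant on a small ball, uniformly in small parameters. A cutoff at scale `α` has
Lipschitz constant of order `1 / α` while this difference, normalised to vanish at `0`, is of order
`α`; so multiplying by the cutoff keeps the Lipschitz constant small, and the cut-off map is a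
globally small perturbation of `L`, hence a diffeomorphism.
-/

section Perturbation

variable {𝕜 F H : Type*} [NontriviallyNormedField 𝕜] [NormedAddCommGroup F] [NormedSpace 𝕜 F]
  [NormedAddCommGroup H] [NormedSpace 𝕜 H] {L : F ≃L[𝕜] H} {c : ℝ≥0}

theorem norm_sub_le_of_approximatesLinearOn {f : F → H} {f' A : F →L[𝕜] H} {z : F}
    (hf : HasFDerivAt f f' z) (happ : ApproximatesLinearOn f A univ c) : ‖f' - A‖ ≤ c :=
  (hf.sub A.hasFDerivAt).le_of_lipschitz
    (lipschitzOnWith_univ.1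
      (ApproximatesLinearOn.approximatesLinearOn_iff_lipschitzOnWith.1 happ))

variable [CompleteSpace F]

theorem isInvertible_of_norm_sub_le {T : F →L[𝕜] H}
    (hc : Subsingleton F ∨ c < ‖(L.symm : H →L[𝕜] F)‖₊⁻¹) (hT : ‖T - L‖ ≤ c) :
    T.IsInvertible := by
  have happ : ApproximatesLinearOn T (L : F →L[𝕜] H) univ c := fun x _ y _ => by
    rw [← map_sub]
    exact (T - L).le_of_opNorm_le hT (x - y)
  let e := happ.toHomeomorph T hc
  exact ⟨⟨e.toEquiv.toLinearEquiv T.toLinearMap.isLinear, e.continuous, e.symm.continuous⟩, rfl⟩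

theorem exists_diffeomorph_of_approximatesLinearOn {n : WithTop ℕ∞} (hn : n ≠ 0) {f : F → H}
    (hf : ContDiff 𝕜 n f) (happ : ApproximatesLinearOn f (L : F →L[𝕜] H) univ c)
    (hc : Subsingleton F ∨ c < ‖(L.symm : H →L[𝕜] F)‖₊⁻¹) :
    ∃ Φ : F ≃ₘ^n⟮𝓘(𝕜, F), 𝓘(𝕜, H)⟯ H, ⇑Φ = f := by
  have hderiv (z : F) : HasFDerivAt f (fderiv 𝕜 f z) z := (hf.differentiable hn z).hasFDerivAt
  have hinv (z : F) : (fderiv 𝕜 f z).IsInvertible :=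
    isInvertible_of_norm_sub_le hc (norm_sub_le_of_approximatesLinearOn (hderiv z) happ)
  choose T hT using hinv
  have hT' (z : F) : HasFDerivAt f (T z : F →L[𝕜] H) z := hT z ▸ hderiv z
  let e := happ.toHomeomorph f hc
  exact ⟨⟨e.toEquiv, hf.contMDiff, (e.contDiff_symm hT' hf).contMDiff⟩, rfl⟩

end Perturbation

section Cutoff

theorem lipschitzWith_smul_of_eqOn_compl {𝕜 Y G : Type*} [NormedField 𝕜]
    [PseudoMetricSpace Y] [SeminormedAddCommGroup G] [NormedSpace 𝕜 G]
    {χ : Y → 𝕜} {r : Y → G} {s : Set Y} {K c B : ℝ≥0}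
    (hχ : LipschitzWith K χ) (hχ_le : ∀ x, ‖χ x‖ ≤ 1) (hχ_zero : EqOn χ 0 sᶜ)
    (hr : LipschitzOnWith c r s) (hr_le : ∀ x ∈ s, ‖r x‖ ≤ B) :
    LipschitzWith (c + K * B) fun x => χ x • r x := by
  have hmul (x y : Y) (hy : y ∈ s) : ‖(χ x - χ y) • r y‖ ≤ K * B * dist x y := by
    calc ‖(χ x - χ y) • r y‖ = dist (χ x) (χ y) * ‖r y‖ := by rw [norm_smul, dist_eq_norm]
      _ ≤ K * dist x y * B := by gcongr; exacts [hχ.dist_le_mul x y, hr_le y hy]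
      _ = K * B * dist x y := by ring
  have hle (x y : Y) (hy : y ∈ s) : dist (χ x • r x) (χ y • r y) ≤ (c + K * B) * dist x y := by
    have hsplit : χ x • r x - χ y • r y = χ x • (r x - r y) + (χ x - χ y) • r y := by
      rw [smul_sub, sub_smul, sub_add_sub_cancel]
    have hdiff : ‖χ x • (r x - r y)‖ ≤ c * dist x y := by
      by_cases hx : x ∈ s
      · rw [norm_smul, ← dist_eq_norm, ← one_mul (c * dist x y)]
        gcongr
        exacts [hχ_le x, hr.dist_le_mul x hx y hy]
      · rw [hχ_zero hx, Pi.zero_apply, zero_smul, norm_zero]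
        positivity
    calc dist (χ x • r x) (χ y • r y) ≤ ‖χ x • (r x - r y)‖ + ‖(χ x - χ y) • r y‖ := by
          rw [dist_eq_norm, hsplit]; exact norm_add_le _ _
      _ ≤ c * dist x y + K * B * dist x y := add_le_add hdiff (hmul x y hy)
      _ = (c + K * B) * dist x y := by ring
  refine LipschitzWith.of_dist_le_mul fun x y => ?_
  push_cast
  by_cases hy : y ∈ s
  · exact hle x y hy
  by_cases hx : x ∈ s
  · rw [dist_comm, dist_comm x]
    exact hle y x hx
  · simp only [hχ_zero hx, hχ_zero hy, Pi.zero_apply, zero_smul, dist_self]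
    positivity

/-- The bump function on `ℝ` giving the profile of `radialCutoff`. -/
def unitBump : ContDiffBump (0 : ℝ) := ⟨1, 2, one_pos, one_lt_two⟩

/-- The smooth radial cutoff at scale `α`: it is `1` on the ball of radius `α` and `0` outside the
ball of radius `2 * α` (but constantly `1` for `α = 0`). Composing a bump function on `ℝ` with the
norm, rather than using one on `F`, gives Lipschitz bounds without any compactness of balls in `F`.
-/
noncomputable def radialCutoff {F : Type*} [Norm F] (α : ℝ≥0) (z : F) : ℝ := unitBump (‖z‖ / α)

theorem norm_radialCutoff_le_one {F : Type*} [Norm F] (α : ℝ≥0) (z : F) :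
    ‖radialCutoff α z‖ ≤ 1 := by
  rw [radialCutoff, Real.norm_of_nonneg unitBump.nonneg]
  exact unitBump.le_one

variable {F : Type*} {α : ℝ≥0}

section SeminormedAddCommGroup

variable [SeminormedAddCommGroup F]

theorem radialCutoff_eqOn_one (hα : 0 < α) : EqOn (radialCutoff α) 1 (closedBall (0 : F) α) := by
  intro z hz
  refine unitBump.one_of_mem_closedBall ?_
  rw [mem_closedBall_zero_iff] at hz ⊢
  rw [Real.norm_of_nonneg (by positivity)]
  exact div_le_one_of_le₀ hz α.coe_nonneg

theorem radialCutoff_eqOn_zero (hα : 0 < α) :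
    EqOn (radialCutoff α) 0 (closedBall (0 : F) (2 * α))ᶜ := by
  intro z hz
  refine unitBump.zero_of_le_dist ?_
  rw [mem_compl_iff, mem_closedBall_zero_iff, not_le] at hz
  rw [dist_zero_right, Real.norm_of_nonneg (by positivity)]
  exact (le_div_iff₀ (NNReal.coe_pos.2 hα)).2 hz.le

theorem exists_lipschitzWith_radialCutoff (F : Type*) [SeminormedAddCommGroup F] :
    ∃ M : ℝ≥0, ∀ α : ℝ≥0, LipschitzWith (M * α⁻¹) (radialCutoff α : F → ℝ) := by
  obtain ⟨M, hM⟩ := (unitBump.contDiff (n := 1)).lipschitzWith_of_hasCompactSupport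
    unitBump.hasCompactSupport one_ne_zero
  refine ⟨M, fun α => hM.comp (LipschitzWith.of_dist_le_mul fun x y => ?_)⟩
  rw [Real.dist_eq, ← sub_div, abs_div, NNReal.abs_eq, NNReal.coe_inv, div_eq_inv_mul,
    dist_eq_norm]
  gcongr
  exact abs_norm_sub_norm_le x y

end SeminormedAddCommGroup

theorem contDiff_radialCutoff [NormedAddCommGroup F] [InnerProductSpace ℝ F] {n : ℕ∞}
    (hα : 0 < α) : ContDiff ℝ n (radialCutoff α : F → ℝ) := by
  refine contDiff_iff_contDiffAt.2 fun z => ?_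
  rcases eq_or_ne z 0 with rfl | hz
  · exact contDiffAt_const.congr_of_eventuallyEq
      ((radialCutoff_eqOn_one hα).eventuallyEq_of_mem (closedBall_mem_nhds 0 hα))
  · exact unitBump.contDiffAt.comp z ((contDiffAt_norm ℝ hz).div_const _)

theorem exists_contDiff_extension_approximatesLinearOn_univ (F H : Type*) [NormedAddCommGroup F]
    [InnerProductSpace ℝ F] [NormedAddCommGroup H] [NormedSpace ℝ H] :
    ∃ C : ℝ≥0, 0 < C ∧ ∀ {n : ℕ∞} {f : F → H} {L : F →L[ℝ] H} {c α : ℝ≥0}, 0 < α →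
      ContDiff ℝ n f → ApproximatesLinearOn f L (closedBall 0 (2 * α)) c →
      ∃ h : F → H, ContDiff ℝ n h ∧ ApproximatesLinearOn h L univ (C * c) ∧
        EqOn h f (closedBall 0 α) := by
  obtain ⟨M, hM⟩ := exists_lipschitzWith_radialCutoff F
  refine ⟨1 + 2 * M, by positivity, fun {n f L c α} hα hf happ => ?_⟩
  let r : F → H := fun z => f z - L z - f 0
  have hr : LipschitzOnWith c r (closedBall 0 (2 * α)) := by
    simpa [r] using
      (ApproximatesLinearOn.approximatesLinearOn_iff_lipschitzOnWith.1 happ).sub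
        (LipschitzWith.const (f 0)).lipschitzOnWith
  have hr_le (z : F) (hz : z ∈ closedBall 0 (2 * (α : ℝ))) : ‖r z‖ ≤ ↑(c * (2 * α)) := by
    have h := hr.dist_le_mul z hz 0 (mem_closedBall_self (by positivity))
    have hr0 : r 0 = 0 := by simp [r]
    rw [hr0, dist_zero_right, dist_zero_right] at h
    exact h.trans (mul_le_mul_of_nonneg_left (mem_closedBall_zero_iff.1 hz) c.coe_nonneg)
  have hχr := lipschitzWith_smul_of_eqOn_compl (hM α) (norm_radialCutoff_le_one α)
    (radialCutoff_eqOn_zero hα) hr hr_le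
  have hconst : c + M * α⁻¹ * (c * (2 * α)) = (1 + 2 * M) * c := by field_simp
  rw [hconst] at hχr
  refine ⟨fun z => f 0 + L z + radialCutoff α z • r z, ?_, ?_, fun z hz => ?_⟩
  · exact (contDiff_const.add L.contDiff).add ((contDiff_radialCutoff hα).smul
      ((hf.sub L.contDiff).sub contDiff_const))
  · intro x _ y _
    have hxy : f 0 + L x + radialCutoff α x • r x - (f 0 + L y + radialCutoff α y • r y) -
        L (x - y) = radialCutoff α x • r x - radialCutoff α y • r y := by
      rw [map_sub]
      abel
    simpa only [hxy, dist_eq_norm] using hχr.dist_le_mul x y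
  · simp only [r, radialCutoff_eqOn_one hα hz, Pi.one_apply, one_smul]
    abel

end Cutoff

theorem exists_approximatesLinearOn_slice {𝕜 W F H : Type*} [NontriviallyNormedField 𝕜]
    [NormedAddCommGroup W] [NormedSpace 𝕜 W] [NormedAddCommGroup F] [NormedSpace 𝕜 F]
    [NormedAddCommGroup H] [NormedSpace 𝕜 H]
    {f : W × F → H} {f' : W × F →L[𝕜] H} (hf : HasStrictFDerivAt f f' 0) {c : ℝ≥0} (hc : 0 < c) :
    ∃ α : ℝ≥0, 0 < α ∧ ∀ w : W, ‖w‖ ≤ α →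
      ApproximatesLinearOn (fun z => f (w, z)) (f'.comp (.inr 𝕜 W F)) (closedBall 0 (2 * α)) c := by
  obtain ⟨s, hs, happ⟩ := hf.approximates_deriv_on_nhds (.inr hc)
  obtain ⟨δ, hδ, hball⟩ := nhds_basis_closedBall.mem_iff.1 hs
  lift δ to ℝ≥0 using hδ.le
  refine ⟨δ / 2, half_pos hδ, fun w hw x hx y hy => ?_⟩
  have hmem (z : F) (hz : z ∈ closedBall 0 (2 * ((δ / 2 : ℝ≥0) : ℝ))) : (w, z) ∈ s := by
    refine hball ?_
    push_cast at hw hz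
    rw [mem_closedBall_zero_iff] at hz ⊢
    exact max_le (by linarith [norm_nonneg w]) (by linarith)
  simpa [Prod.norm_def] using happ (w, x) (hmem x hx) (w, y) (hmem y hy)

section LocalExtension

variable {F H : Type*} [NormedAddCommGroup F] [InnerProductSpace ℝ F] [CompleteSpace F]
  [NormedAddCommGroup H] [NormedSpace ℝ H]

theorem exists_diffeomorph_extension_of_approximatesLinearOn_closedBall {n : ℕ∞} (hn : n ≠ 0)
    (L : F ≃L[ℝ] H) :
    ∃ c : ℝ≥0, 0 < c ∧ ∀ {f : F → H} {α : ℝ≥0}, 0 < α → ContDiff ℝ n f →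
      ApproximatesLinearOn f (L : F →L[ℝ] H) (closedBall 0 (2 * α)) c →
      ∃ Φ : F ≃ₘ^n⟮𝓘(ℝ, F), 𝓘(ℝ, H)⟯ H, EqOn Φ f (closedBall 0 α) := by
  obtain ⟨C, hC, hext⟩ := exists_contDiff_extension_approximatesLinearOn_univ F H
  obtain ⟨K, hK, hKL⟩ : ∃ K : ℝ≥0, 0 < K ∧ (Subsingleton F ∨ K < ‖(L.symm : H →L[ℝ] F)‖₊⁻¹) := by
    rcases L.subsingleton_or_nnnorm_symm_pos with hF | hL
    · exact ⟨1, one_pos, .inl hF⟩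
    · exact (exists_between (inv_pos.2 hL)).imp fun K hK => ⟨hK.1, .inr hK.2⟩
  refine ⟨K / C, div_pos hK hC, fun {f α} hα hf happ => ?_⟩
  obtain ⟨h, hh, hhL, hhf⟩ := hext hα hf happ
  rw [mul_div_cancel₀ K hC.ne'] at hhL
  obtain ⟨Φ, rfl⟩ := exists_diffeomorph_of_approximatesLinearOn (mod_cast hn) hh hhL hKL
  exact ⟨Φ, hhf⟩

theorem exists_diffeomorph_extension_of_hasFDerivAt_slice {W : Type*} [NormedAddCommGroup W]
    [NormedSpace ℝ W] {n : ℕ∞} (hn : n ≠ 0) {f : W × F → H} (hf : ContDiff ℝ n f)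
    {L : F ≃L[ℝ] H} (hL : HasFDerivAt (fun z => f (0, z)) (L : F →L[ℝ] H) 0) :
    ∃ α : ℝ≥0, 0 < α ∧ ∀ w : W, ‖w‖ ≤ α →
      ∃ Φ : F ≃ₘ^n⟮𝓘(ℝ, F), 𝓘(ℝ, H)⟯ H, EqOn Φ (fun z => f (w, z)) (closedBall 0 α) := by
  have hstrict : HasStrictFDerivAt f (fderiv ℝ f 0) 0 :=
    hf.contDiffAt.hasStrictFDerivAt (mod_cast hn)
  have hpartial : (fderiv ℝ f 0).comp (.inr ℝ W F) = L :=
    (hstrict.hasFDerivAt.comp (0 : F) (hasFDerivAt_prodMk_right (0 : W) (0 : F))).unique hL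
  obtain ⟨c, hc, hext⟩ := exists_diffeomorph_extension_of_approximatesLinearOn_closedBall hn L
  obtain ⟨α, hα, happ⟩ := exists_approximatesLinearOn_slice hstrict hc
  rw [hpartial] at happ
  exact ⟨α, hα, fun w hw => hext hα (hf.comp (contDiff_prodMk_right w)) (happ w hw)⟩

end LocalExtension

theorem hasFDerivAt_two_step {𝕜 H E : Type*} [NontriviallyNormedField 𝕜] [NormedAddCommGroup H]
    [NormedSpace 𝕜 H] [NormedAddCommGroup E] [NormedSpace 𝕜 E] {S : H × E → H}
    {S' : H × E →L[𝕜] H} (hS : HasFDerivAt S S' (0, 0)) (hS0 : S (0, 0) = 0) :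
    HasFDerivAt (fun η => S (S (0, η), 0)) ((S'.comp (.inl 𝕜 H E)).comp (S'.comp (.inr 𝕜 H E)))
      0 := by
  have hη : HasFDerivAt (fun η => S (0, η)) (S'.comp (.inr 𝕜 H E)) 0 :=
    hS.comp (0 : E) (hasFDerivAt_prodMk_right 0 0)
  have hu : HasFDerivAt (fun u => S (u, 0)) (S'.comp (.inl 𝕜 H E)) (S (0, 0)) := by
    rw [hS0]
    exact hS.comp (0 : H) (hasFDerivAt_prodMk_left 0 0)
  exact hu.comp (0 : E) hη

theorem bijective_domRestrict_of_isCompl_ker {R M N : Type*} [Ring R] [AddCommGroup M]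
    [AddCommGroup N] [Module R M] [Module R N] {f : M →ₗ[R] N} (hf : Function.Surjective f)
    {C : Submodule R M} (hC : IsCompl C f.ker) : Function.Bijective (f.domRestrict C) :=
  ((f.kerComplementEquivRange hC).trans
    (LinearEquiv.ofTop f.range (LinearMap.range_eq_top.2 hf))).bijective

theorem local_diffeo_extension_for_S2_general
    {H E : Type*} [NormedAddCommGroup H] [NormedSpace ℝ H] [CompleteSpace H]
    [NormedAddCommGroup E] [InnerProductSpace ℝ E] [CompleteSpace E]
    {n : ℕ∞} (hn : n ≠ 0) {S : H × E → H} (hS : ContDiff ℝ n S) (hS0 : S (0, 0) = 0)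
    (hsurj : Function.Surjective ((fderiv ℝ S (0, 0)).comp (ContinuousLinearMap.inr ℝ H E)))
    (hiso : Function.Bijective ((fderiv ℝ S (0, 0)).comp (ContinuousLinearMap.inl ℝ H E))) :
    ∃ (F : Submodule ℝ E) (α : ℝ), 0 < α ∧ Nonempty (F ≃L[ℝ] H) ∧
      ∀ (v : H) (z₁m z₂ : E), ‖v‖ ≤ α → ‖z₁m‖ ≤ α → ‖z₂‖ ≤ α →
        InjOn (fun z₁p : F => S (S (v, (z₁p : E) + z₁m), z₂)) (ball 0 α) ∧
        ∃ (Φ : F → H) (Ψ : H → F), ContDiff ℝ n Φ ∧ ContDiff ℝ n Ψ ∧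
          Function.LeftInverse Ψ Φ ∧ Function.RightInverse Ψ Φ ∧
          ∀ z₁p : F, ‖z₁p‖ < α → Φ z₁p = S (S (v, (z₁p : E) + z₁m), z₂) := by
  let A := (fderiv ℝ S (0, 0)).comp (ContinuousLinearMap.inl ℝ H E)
  let B := (fderiv ℝ S (0, 0)).comp (ContinuousLinearMap.inr ℝ H E)
  let F : Submodule ℝ E := B.kerᗮ
  have hbij : Function.Bijective (A.comp (B.comp F.subtypeL)) :=
    hiso.comp (bijective_domRestrict_of_isCompl_ker hsurj B.ker.isCompl_orthogonal.symm)
  let L : F ≃L[ℝ] H := .ofBijective (A.comp (B.comp F.subtypeL))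
    (LinearMap.ker_eq_bot.2 hbij.1) (LinearMap.range_eq_top.2 hbij.2)
  let f : (H × E × E) × F → H := fun p => S (S (p.1.1, (p.2 : E) + p.1.2.1), p.1.2.2)
  have hf : ContDiff ℝ n f := by
    have hval : ContDiff ℝ n fun p : (H × E × E) × F => (p.2 : E) :=
      F.subtypeL.contDiff.comp contDiff_snd
    fun_prop
  have hL : HasFDerivAt (fun z : F => f (0, z)) (L : F →L[ℝ] H) 0 := by
    have hS' := (hS.differentiable (mod_cast hn) (0, 0)).hasFDerivAt
    have hslice : (fun z : F => f (0, z)) = (fun η => S (S (0, η), 0)) ∘ F.subtypeL := by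
      ext z
      simp [f]
    rw [hslice]
    exact (hasFDerivAt_two_step hS' hS0).comp (0 : F) F.subtypeL.hasFDerivAt
  obtain ⟨α, hα, hext⟩ := exists_diffeomorph_extension_of_hasFDerivAt_slice hn hf hL
  refine ⟨F, α, hα, ⟨L⟩, fun v z₁m z₂ hv hz₁m hz₂ => ?_⟩
  obtain ⟨Φ, hΦ⟩ := hext (v, z₁m, z₂) (max_le hv (max_le hz₁m hz₂))
  replace hΦ := hΦ.mono ball_subset_closedBall
  exact ⟨hΦ.injOn_iff.1 Φ.injective.injOn, Φ, Φ.symm, Φ.contDiff, Φ.symm.contDiff, Φ.left_inv,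
    Φ.right_inv, fun z hz => hΦ (mem_ball_zero_iff.2 hz)⟩

/-- **Lemma 2.1.** Let `H`, `E` be finite-dimensional Euclidean spaces, `X ⊂ H`, `K ⊂ E`
compact sets containing the origins, and `S : H × E → H` a `C²` map with `S(0,0) = 0` and
`S(X × K) ⊂ X`, such that `D_η S(0,0) : E → H` is surjective and `D_u S(0,0) : H → H` is an
isomorphism.  Set `S₂(v; z₁, z₂) = S(S(v,z₁), z₂)`.  Then there are a subspace `F ⊂ E` with
`dim F = dim H` and a number `α > 0` such that, for any
`(v, z₁⁻, z₂) ∈ B̄_H(α) × B̄_{F^⊥}(α) × B̄_E(α)`, the `C¹`-smooth map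
`B_F(α) ∋ z₁⁺ ↦ S₂(v; z₁⁺ + z₁⁻, z₂)` is a diffeomorphism onto its image and can be extended
to a global diffeomorphism `Φ(·; v, z₁⁻, z₂)` from `F` onto `H`. -/
theorem local_diffeo_extension_for_S2
    {H E : Type*}
    [NormedAddCommGroup H] [InnerProductSpace ℝ H] [FiniteDimensional ℝ H]
    [NormedAddCommGroup E] [InnerProductSpace ℝ E] [FiniteDimensional ℝ E]
    (X : Set H) (K : Set E) (hX : IsCompact X) (hK : IsCompact K)
    (h0X : (0 : H) ∈ X) (h0K : (0 : E) ∈ K)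
    (S : H × E → H) (hS : ContDiff ℝ 2 S) (hS0 : S (0, 0) = 0)
    (hinv : ∀ u ∈ X, ∀ η ∈ K, S (u, η) ∈ X)
    (hsurj : Function.Surjective ((fderiv ℝ S (0, 0)).comp (ContinuousLinearMap.inr ℝ H E)))
    (hiso : Function.Bijective ((fderiv ℝ S (0, 0)).comp (ContinuousLinearMap.inl ℝ H E))) :
    ∃ (F : Submodule ℝ E) (α : ℝ), 0 < α ∧
      Module.finrank ℝ F = Module.finrank ℝ H ∧
      ∀ (v : H) (z₁m : E) (z₂ : E), ‖v‖ ≤ α → z₁m ∈ Fᗮ → ‖z₁m‖ ≤ α → ‖z₂‖ ≤ α →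
        -- the map `z₁⁺ ↦ S₂(v; z₁⁺ + z₁⁻, z₂)` is injective on `B_F(α)` …
        (Set.InjOn (fun z₁p : F => S (S (v, (z₁p : E) + z₁m), z₂)) (ball 0 α)) ∧
        -- … and extends to a global diffeomorphism `Φ : F → H`
        ∃ (Φ : F → H) (Ψ : H → F), ContDiff ℝ 1 Φ ∧ ContDiff ℝ 1 Ψ ∧
          Function.LeftInverse Ψ Φ ∧ Function.RightInverse Ψ Φ ∧
          ∀ z₁p : F, ‖z₁p‖ < α → Φ z₁p = S (S (v, (z₁p : E) + z₁m), z₂) := by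
  obtain ⟨F, α, hα, ⟨L⟩, h⟩ := local_diffeo_extension_for_S2_general (n := 1) one_ne_zero
    (hS.of_le one_le_two) hS0 hsurj hiso
  exact ⟨F, α, hα, L.toLinearEquiv.finrank_eq, fun v z₁m z₂ hv _ => h v z₁m z₂ hv⟩
end

section
/- Let H and E be finite-dimensional Euclidean spaces, X ⊂ H and K ⊂ E compact subsets containing the origins, and S: H × E → H a C²-smooth map with S(0,0) = 0 and S(X × K) ⊂ X, satisfying the Controllability hypothesis: D_η S(0,0): E → H is surjective and D_u S(0,0): H → H is an isomorphism. Let Q(y;·) be a Feller transition probability on E with supp Q(y;·) ⊂ K for y ∈ K, satisfying the Minorisation hypothesis: there exist r > 0 and a bounded continuous ρ: B̄_E(r) × E → ℝ₊ with ρ(0,0) > 0 such that Q(y; dz) ≥ ρ(y,z) ℓ(dz) for y ∈ K ∩ B̄_E(r). Let 𝒫₂ be the time-2 transition probability of the Markov process U_k = (S(v_{k−1}, ζ_k), ζ_k) on 𝔛 = X × K, where {ζ_k} is a Markov process with transition probability Q. Then there exist a nonzero non-negative Borel measure λ on 𝔛 and a number δ > 0 such that 𝒫₂(U;·) ≥ λ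 for all U ∈ B̄_𝔛(0, δ); consequently ‖𝒫₂(U₁;·) − 𝒫₂(U₂;·)‖_var ≤ 1 − λ(𝔛) for all U₁, U₂ ∈ B̄_𝔛(0, δ). -/
open MeasureTheory ProbabilityTheory Set Metric

/-- The time-1 transition probability `𝒫(U;·) = 𝒮_*((v,ξ), Q(ξ;·))` of the Markov process
`U_k = (S(v_{k-1}, ζ_k), ζ_k)` on the extended phase space. -/
noncomputable def Pstep {H E : Type*} [MeasurableSpace H] [MeasurableSpace E]
    (S : H × E → H) (Q : Kernel E E) (U : H × E) : Measure (H × E) :=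
  (Q U.2).map fun z => (S (U.1, z), z)

/-- The time-`m` transition probability of the Markov process on the extended phase space. -/
noncomputable def Piter {H E : Type*} [MeasurableSpace H] [MeasurableSpace E]
    (S : H × E → H) (Q : Kernel E E) : ℕ → H × E → Measure (H × E)
  | 0, U => Measure.dirac U
  | m + 1, U => (Pstep S Q U).bind (Piter S Q m)

/-!
Let `y` and `z` be the two noises. At a fixed point of `S` the derivative of `S (S (u, y), z)` in
`y` is `D_u S ∘ D_η S`, which is surjective; let `R` be a linear right inverse of it. As a function
of `h` in a small ball of `H`, `S (S (u, y + R h), z)` is then a perturbation of the identity that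
is uniform in `(u, z, y)`, so its image of Haar measure dominates a multiple of Haar measure on a
fixed ball. Haar measure on `E` dominates, up to a constant, its average over the translates
`y + R h` with `y` in a smaller neighbourhood, so for every `(u, z)` the law of `S (S (u, y), z)`
dominates one and the same measure `τ`. Integrating over `z` minorises the two-step transition
probability by `τ ⊗ n`, where `n` is a multiple of Haar measure near the fixed point.
-/

open scoped ENNReal NNReal Topology

section GeneralMeasures

theorem restrict_conv_le {G : Type*} [MeasurableSpace G] [AddGroup G] [MeasurableAdd₂ G]
    (ν m : Measure G) [SFinite ν] [SFinite m] [ν.IsAddRightInvariant] {A B : Set G}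
    (h : ∀ᵐ x ∂m, ∀ z ∈ B, z + x ∈ A) :
    ν.restrict B ∗ m ≤ m univ • ν.restrict A := by
  refine Measure.le_iff.2 fun C hC => ?_
  rw [Measure.conv, Measure.map_apply measurable_add hC,
    Measure.prod_apply_symm (measurable_add hC)]
  calc ∫⁻ x, ν.restrict B ((· + x) ⁻¹' C) ∂m
      ≤ ∫⁻ _, ν.restrict A C ∂m := by
        refine lintegral_mono_ae (h.mono fun x hx => ?_)
        rw [Measure.restrict_apply (measurable_add_const x hC), Measure.restrict_apply hC,
          ← measure_preimage_add_right ν x (C ∩ A)]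
        exact measure_mono fun z hz => ⟨hz.1, hx z hz.2⟩
    _ = (m univ • ν.restrict A) C := by simp [mul_comm]

theorem smul_le_map_conv {G γ : Type*} [MeasurableSpace G] [AddMonoid G] [MeasurableAdd₂ G]
    [MeasurableSpace γ] {ν m : Measure G} [SFinite m] {τ : Measure γ}
    {g : G → γ} (hg : Measurable g) (h : ∀ᵐ z ∂ν, τ ≤ m.map fun x => g (z + x)) :
    ν univ • τ ≤ (ν ∗ m).map g := by
  refine Measure.le_iff.2 fun C hC => ?_
  rw [Measure.map_apply hg hC, Measure.conv, Measure.map_apply measurable_add (hg hC),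
    Measure.prod_apply (measurable_add (hg hC))]
  calc (ν univ • τ) C = ∫⁻ _, τ C ∂ν := by simp [mul_comm]
    _ ≤ ∫⁻ z, m ((z + ·) ⁻¹' (g ⁻¹' C)) ∂ν := by
        refine lintegral_mono_ae (h.mono fun z hz => (hz C).trans_eq ?_)
        exact Measure.map_apply (hg.comp (measurable_const_add z)) hC

theorem inv_mul_smul_le_map_restrict_of_translates {G γ : Type*} [MeasurableSpace G] [AddGroup G]
    [MeasurableAdd₂ G] [MeasurableSpace γ] {ν m : Measure G} [SFinite ν] [SFinite m]
    [ν.IsAddRightInvariant] {τ : Measure γ} {g : G → γ} (hg : Measurable g) {A B : Set G}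
    (hB : MeasurableSet B) (hBA : ∀ᵐ x ∂m, ∀ z ∈ B, z + x ∈ A)
    (hτ : ∀ z ∈ B, τ ≤ m.map fun x => g (z + x)) :
    ((m univ)⁻¹ * ν B) • τ ≤ (ν.restrict A).map g := by
  have havg : ν B • τ ≤ m univ • (ν.restrict A).map g :=
    calc ν B • τ = ν.restrict B univ • τ := by rw [Measure.restrict_apply_univ]
      _ ≤ (ν.restrict B ∗ m).map g := smul_le_map_conv hg ((ae_restrict_mem hB).mono hτ)
      _ ≤ (m univ • ν.restrict A).map g := Measure.map_mono (restrict_conv_le ν m hBA) hg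
      _ = m univ • (ν.restrict A).map g := Measure.map_smul _ _ _
  calc ((m univ)⁻¹ * ν B) • τ = (m univ)⁻¹ • ν B • τ := mul_smul _ _ _
    _ ≤ (m univ)⁻¹ • m univ • (ν.restrict A).map g := smul_mono_right _ havg
    _ = ((m univ)⁻¹ * m univ) • (ν.restrict A).map g := (mul_smul _ _ _).symm
    _ ≤ (1 : ℝ≥0∞) • (ν.restrict A).map g := by
        gcongr
        exact ENNReal.inv_mul_le_one _
    _ = (ν.restrict A).map g := one_smul _ _

theorem ae_mem_image_map_restrict {α β : Type*} [MeasurableSpace α] [MeasurableSpace β]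
    (μ : Measure α) {f : α → β} (hf : Measurable f) {s : Set α} (hs : MeasurableSet s)
    (hfs : MeasurableSet (f '' s)) :
    ∀ᵐ y ∂(μ.restrict s).map f, y ∈ f '' s :=
  (ae_map_iff hf.aemeasurable hfs).2 <| (ae_restrict_mem hs).mono fun _ => mem_image_of_mem f

theorem prod_le_map_prod {α β γ : Type*} [MeasurableSpace α] [MeasurableSpace β]
    [MeasurableSpace γ] {m : Measure α} {n : Measure β} {τ : Measure γ} [SFinite m] [SFinite n]
    [SFinite τ] {g : α × β → γ} (hg : Measurable g)
    (h : ∀ᵐ z ∂n, τ ≤ m.map fun y => g (y, z)) :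
    τ.prod n ≤ (m.prod n).map fun q => (g q, q.2) := by
  have hg₂ : Measurable fun q : α × β => (g q, q.2) := hg.prodMk measurable_snd
  refine Measure.le_iff.2 fun C hC => ?_
  rw [Measure.map_apply hg₂ hC, Measure.prod_apply_symm hC, Measure.prod_apply_symm (hg₂ hC)]
  refine lintegral_mono_ae (h.mono fun z hz => (hz _).trans_eq ?_)
  exact Measure.map_apply (hg.comp measurable_prodMk_right) (measurable_prodMk_right hC)

theorem exists_isOpen_smul_restrict_le {Y : Type*} [TopologicalSpace Y] [MeasurableSpace Y]
    [OpensMeasurableSpace Y] {ν : Measure Y} {Q : Y → Measure Y} {K : Set Y} {y₀ : Y}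
    {ρ : Y → Y → ℝ≥0∞} (hρ : LowerSemicontinuousAt (fun p : Y × Y => ρ p.1 p.2) (y₀, y₀))
    {c : ℝ≥0∞} (hc : c < ρ y₀ y₀) (hQ : ∀ᶠ y in 𝓝[K] y₀, ν.withDensity (ρ y) ≤ Q y) :
    ∃ N : Set Y, IsOpen N ∧ y₀ ∈ N ∧ ∀ y ∈ N ∩ K, c • ν.restrict N ≤ Q y := by
  obtain ⟨V, hV, hy₀V, hVρ⟩ := exists_nhds_square (hρ c hc)
  obtain ⟨W, hW, hy₀W, hWQ⟩ := mem_nhdsWithin.1 hQ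
  refine ⟨V ∩ W, hV.inter hW, ⟨hy₀V, hy₀W⟩, fun y hy => le_trans ?_ (hWQ ⟨hy.1.2, hy.2⟩)⟩
  calc c • ν.restrict (V ∩ W)
      = (ν.restrict (V ∩ W)).withDensity fun _ => c := (withDensity_const c).symm
    _ ≤ (ν.restrict (V ∩ W)).withDensity (ρ y) :=
        withDensity_mono <| (ae_restrict_mem (hV.inter hW).measurableSet).mono
          fun z hz => (hVρ (mk_mem_prod hy.1.1 hz.1)).le
    _ ≤ ν.withDensity (ρ y) := by
        rw [← restrict_withDensity (hV.inter hW).measurableSet]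
        exact Measure.restrict_le_self

theorem abs_measureReal_sub_le_of_le {α : Type*} [MeasurableSpace α] {P P' l : Measure α}
    [IsProbabilityMeasure P] [IsProbabilityMeasure P'] (h : l ≤ P) (h' : l ≤ P')
    {A : Set α} (hA : MeasurableSet A) :
    |P.real A - P'.real A| ≤ 1 - l.real univ := by
  have real_le {R : Measure α} [IsProbabilityMeasure R] (hR : l ≤ R) (B : Set α) :
      l.real B ≤ R.real B := ENNReal.toReal_mono (measure_ne_top R B) (hR B)
  have : IsFiniteMeasure l := isFiniteMeasure_of_le P h
  have hl : l.real A + l.real Aᶜ = l.real univ := measureReal_add_measureReal_compl hA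
  have hP : P.real A + P.real Aᶜ = 1 := by simp [measureReal_add_measureReal_compl hA]
  have hP' : P'.real A + P'.real Aᶜ = 1 := by simp [measureReal_add_measureReal_compl hA]
  rw [abs_le]
  constructor <;> linarith [real_le h A, real_le h Aᶜ, real_le h' A, real_le h' Aᶜ]

end GeneralMeasures

section Submersions

theorem eventually_restrict_closedBall_le_map {F : Type*} [NormedAddCommGroup F]
    [NormedSpace ℝ F] [FiniteDimensional ℝ F] [MeasurableSpace F] [BorelSpace F]
    (μ : Measure F) [μ.IsAddHaarMeasure] :
    ∀ᶠ c in 𝓝[>] (0 : ℝ≥0), ∀ (f : F → F) (x y : F) (s : ℝ), Measurable f →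
      ApproximatesLinearOn f (ContinuousLinearMap.id ℝ F) (closedBall x s) c →
      dist (f x) y ≤ s / 4 →
      μ.restrict (closedBall y (s / 4)) ≤ (2 : ℝ≥0∞) • (μ.restrict (closedBall x s)).map f := by
  have hc_half : ∀ᶠ c in 𝓝[>] (0 : ℝ≥0), c ≤ 1 / 2 :=
    nhdsWithin_le_nhds (Iic_mem_nhds (by norm_num))
  filter_upwards [hc_half, addHaar_image_le_mul_of_det_lt μ (ContinuousLinearMap.id ℝ F) (m := 2)
    (by simp [ContinuousLinearMap.det])] with c hc hc_image f x y s hf hf_approx hxy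
  let idInverse : (ContinuousLinearMap.id ℝ F).NonlinearRightInverse :=
    { toFun := id, nnnorm := 1, bound' := by simp, right_inv' := by simp }
  have hball : closedBall y (s / 4) ⊆ closedBall (f x) ((((1 : ℝ≥0) : ℝ)⁻¹ - c) * s) := by
    refine closedBall_subset_closedBall' ?_
    have hc' : (c : ℝ) ≤ 1 / 2 := by exact_mod_cast hc
    rw [dist_comm, NNReal.coe_one]
    nlinarith [dist_nonneg.trans hxy, hc']
  have hs : 0 ≤ s := by linarith [dist_nonneg.trans hxy]
  have hcover : closedBall y (s / 4) ⊆ f '' closedBall x s := hball.trans <|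
    hf_approx.surjOn_closedBall_of_nonlinearRightInverse idInverse hs Subset.rfl
  refine Measure.le_iff.2 fun A hA => ?_
  rw [Measure.smul_apply, Measure.map_apply hf hA, Measure.restrict_apply hA,
    Measure.restrict_apply (hf hA), smul_eq_mul]
  calc μ (A ∩ closedBall y (s / 4))
      ≤ μ (f '' (f ⁻¹' A ∩ closedBall x s)) := by
        rw [image_preimage_inter]
        exact measure_mono (inter_subset_inter_right A hcover)
    _ ≤ 2 * μ (f ⁻¹' A ∩ closedBall x s) :=
        hc_image _ f (hf_approx.mono_set inter_subset_right)

theorem eventually_approximatesLinearOn_closedBall {𝕜 P E F : Type*} [NontriviallyNormedField 𝕜]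
    [NormedAddCommGroup P] [NormedSpace 𝕜 P] [NormedAddCommGroup E] [NormedSpace 𝕜 E]
    [NormedAddCommGroup F] [NormedSpace 𝕜 F] {f : P × E → F} {f' : P × E →L[𝕜] F} {p₀ : P} {x₀ : E}
    (hf : HasStrictFDerivAt f f' (p₀, x₀)) {c : ℝ≥0} (hc : 0 < c) :
    ∀ᶠ s in 𝓝[>] (0 : ℝ), ∀ᶠ p in 𝓝 p₀,
      ApproximatesLinearOn (fun x => f (p, x)) (f'.comp (ContinuousLinearMap.inr 𝕜 P E))
        (closedBall x₀ s) c := by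
  obtain ⟨U, hU, hf_approx⟩ := hf.approximates_deriv_on_nhds (Or.inr hc)
  obtain ⟨A, hA, B, hB, hAB⟩ := mem_nhds_prod_iff.1 hU
  have hsB : ∀ᶠ s in 𝓝[>] (0 : ℝ), closedBall x₀ s ⊆ B :=
    nhdsWithin_le_nhds (eventually_closedBall_subset hB)
  filter_upwards [hsB] with s hs
  filter_upwards [hA] with p hp x hx y hy
  simpa using hf_approx (p, x) (hAB ⟨hp, hs hx⟩) (p, y) (hAB ⟨hp, hs hy⟩)

theorem eventually_forall_closedBall_add_mem {E F : Type*} [TopologicalSpace E] [Add E]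
    [ContinuousAdd E] [PseudoMetricSpace F] {f : F → E} {x₀ : F} (hf : ContinuousAt f x₀) {z₀ : E}
    {N : Set E} (hN : N ∈ 𝓝 (z₀ + f x₀)) :
    ∀ᶠ s in 𝓝[>] (0 : ℝ), ∀ᶠ z in 𝓝 z₀, ∀ x ∈ closedBall x₀ s, z + f x ∈ N := by
  have hadd : ContinuousAt (fun q : E × F => q.1 + f q.2) (z₀, x₀) :=
    continuousAt_fst.add (hf.comp (f := Prod.snd) (x := (z₀, x₀)) continuousAt_snd)
  obtain ⟨B, hB, A, hA, hBA⟩ := mem_nhds_prod_iff.1 (hadd hN)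
  filter_upwards [nhdsWithin_le_nhds (eventually_closedBall_subset hA)] with s hs
  filter_upwards [hB] with z hz x hx
  exact hBA (mk_mem_prod hz (hs hx))

variable {P F : Type*} [NormedAddCommGroup P] [NormedSpace ℝ P]
  [NormedAddCommGroup F] [NormedSpace ℝ F] [FiniteDimensional ℝ F] [MeasurableSpace F]
  [BorelSpace F] (μ : Measure F) [μ.IsAddHaarMeasure]

theorem eventually_restrict_closedBall_le_map_of_hasStrictFDerivAt {f : P × F → F}
    (hf_meas : ∀ p, Measurable fun x => f (p, x)) {f' : P × F →L[ℝ] F} {p₀ : P} {x₀ : F}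
    (hf : HasStrictFDerivAt f f' (p₀, x₀))
    (hf' : f'.comp (ContinuousLinearMap.inr ℝ P F) = ContinuousLinearMap.id ℝ F) :
    ∀ᶠ s in 𝓝[>] (0 : ℝ), ∀ᶠ p in 𝓝 p₀,
      μ.restrict (closedBall (f (p₀, x₀)) (s / 4)) ≤
        (2 : ℝ≥0∞) • (μ.restrict (closedBall x₀ s)).map fun x => f (p, x) := by
  obtain ⟨c, hc_push, hc⟩ :=
    ((eventually_restrict_closedBall_le_map μ).and self_mem_nhdsWithin).exists
  have hcont : ContinuousAt (fun p => f (p, x₀)) p₀ :=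
    hf.continuousAt.comp (f := fun p => (p, x₀)) (by fun_prop)
  filter_upwards [eventually_approximatesLinearOn_closedBall hf hc, self_mem_nhdsWithin]
    with s hs_approx (hs : 0 < s)
  filter_upwards [hs_approx, hcont (closedBall_mem_nhds _ (show 0 < s / 4 by positivity))]
    with p hp_approx hp
  exact hc_push _ x₀ _ s (hf_meas p) (hf' ▸ hp_approx) hp

variable {E : Type*} [NormedAddCommGroup E] [NormedSpace ℝ E] [MeasurableSpace E] [BorelSpace E]

theorem eventually_restrict_closedBall_le_map_translate {G : P × E → F}
    (hG_meas : ∀ p, Measurable fun z => G (p, z)) {G' : P × E →L[ℝ] F} {p₀ : P} {z₀ : E}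
    (hG : HasStrictFDerivAt G G' (p₀, z₀)) {R : F →L[ℝ] E}
    (hR : (G'.comp (ContinuousLinearMap.inr ℝ P E)).comp R = ContinuousLinearMap.id ℝ F) :
    ∀ᶠ s in 𝓝[>] (0 : ℝ), ∀ᶠ q in 𝓝 (p₀, z₀),
      μ.restrict (closedBall (G (p₀, z₀)) (s / 4)) ≤
        (2 : ℝ≥0∞) • (μ.restrict (closedBall 0 s)).map fun h => G (q.1, q.2 + R h) := by
  let L : (P × E) × F →L[ℝ] P × E :=
    ((ContinuousLinearMap.fst ℝ P E).comp (ContinuousLinearMap.fst ℝ (P × E) F)).prod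
      ((ContinuousLinearMap.snd ℝ P E).coprod R)
  have hL₀ : L ((p₀, z₀), 0) = (p₀, z₀) := by simp [L]
  have hGL : HasStrictFDerivAt (fun q => G (L q)) (G'.comp L) ((p₀, z₀), 0) :=
    HasStrictFDerivAt.comp (g := G) _ (by rwa [hL₀]) L.hasStrictFDerivAt
  have hGL_id : (G'.comp L).comp (ContinuousLinearMap.inr ℝ (P × E) F) = .id ℝ F := by
    rw [← hR]
    ext h
    simp [L]
  have hGL_meas : ∀ q : P × E, Measurable fun h => G (L (q, h)) := fun q =>
    (hG_meas q.1).comp (g := fun z => G (q.1, z)) (f := fun h => q.2 + R h) (by fun_prop)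
  have hpush := eventually_restrict_closedBall_le_map_of_hasStrictFDerivAt μ hGL_meas hGL hGL_id
  rwa [hL₀] at hpush

theorem exists_eventually_smul_restrict_le_map_of_surjective [FiniteDimensional ℝ E]
    (ν : Measure E) [ν.IsAddHaarMeasure] {G : P × E → F}
    (hG_meas : ∀ p, Measurable fun z => G (p, z)) {G' : P × E →L[ℝ] F} {p₀ : P} {z₀ : E}
    (hG : HasStrictFDerivAt G G' (p₀, z₀))
    (hG' : Function.Surjective (G'.comp (ContinuousLinearMap.inr ℝ P E)))
    {N : Set E} (hN : N ∈ 𝓝 z₀) :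
    ∃ t > 0, ∃ κ : ℝ≥0∞, κ ≠ 0 ∧ ∀ᶠ p in 𝓝 p₀,
      κ • μ.restrict (closedBall (G (p₀, z₀)) t) ≤ (ν.restrict N).map fun z => G (p, z) := by
  obtain ⟨R, hR⟩ := ContinuousLinearMap.exists_rightInverse_of_surjective _
    (LinearMap.range_eq_top.2 hG')
  obtain ⟨s, ⟨hs_push, hs_mem⟩, hs : 0 < s⟩ :=
    (((eventually_restrict_closedBall_le_map_translate μ hG_meas hG hR).and
      (eventually_forall_closedBall_add_mem (x₀ := 0) R.continuous.continuousAt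
        (by rwa [map_zero, add_zero]))).and self_mem_nhdsWithin).exists
  obtain ⟨V, hV, W, hW, hVW⟩ := mem_nhds_prod_iff.1 hs_push
  obtain ⟨b, hb, hbW⟩ := Metric.mem_nhds_iff.1 (Filter.inter_mem hW hs_mem)
  let m : Measure E := (2 : ℝ≥0∞) • (μ.restrict (closedBall 0 s)).map R
  have hm_ne_top : m univ ≠ ∞ := by
    rw [Measure.smul_apply, Measure.map_apply R.continuous.measurable MeasurableSet.univ]
    simp [ENNReal.mul_eq_top, measure_closedBall_lt_top.ne]
  have hm_mem : ∀ᵐ x ∂m, ∀ z ∈ ball z₀ b, z + x ∈ N := by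
    have hRs : MeasurableSet (R '' closedBall 0 s) :=
      ((isCompact_closedBall 0 s).image R.continuous).measurableSet
    refine Measure.ae_smul_measure ?_ 2
    filter_upwards [ae_mem_image_map_restrict μ R.continuous.measurable
      measurableSet_closedBall hRs]
    rintro _ ⟨h, hh, rfl⟩ z hz
    exact (hbW hz).2 h hh
  refine ⟨s / 4, by positivity, (m univ)⁻¹ * ν (ball z₀ b),
    mul_ne_zero (ENNReal.inv_ne_zero.2 hm_ne_top) (measure_ball_pos ν z₀ hb).ne', ?_⟩
  filter_upwards [hV] with p hp
  refine inv_mul_smul_le_map_restrict_of_translates (hG_meas p) measurableSet_ball hm_mem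
    fun z hz => ?_
  have hGz : Measurable fun x => G (p, z + x) := (hG_meas p).comp (measurable_const_add z)
  rw [Measure.map_smul, Measure.map_map hGz R.continuous.measurable]
  exact hVW (mk_mem_prod hp (hbW hz).1)

end Submersions

section TwoSteps

variable {H E : Type*} [MeasurableSpace H] [MeasurableSpace E] {S : H × E → H} {Q : Kernel E E}

theorem measurable_Pstep (hS : Measurable S) (Q : Kernel E E) [IsSFiniteKernel Q] :
    Measurable (Pstep S Q) := by
  refine Measure.measurable_of_measurable_coe _ fun Γ hΓ => ?_
  have hstep : Measurable fun q : (H × E) × E => (S (q.1.1, q.2), q.2) := by fun_prop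
  have := Kernel.measurable_kernel_prodMk_left (κ := Q.comap Prod.snd measurable_snd) (hstep hΓ)
  convert this using 2 with U
  exact Measure.map_apply (hstep.comp measurable_prodMk_left) hΓ

theorem measurable_Piter (hS : Measurable S) (Q : Kernel E E) [IsSFiniteKernel Q] (m : ℕ) :
    Measurable (Piter S Q m) := by
  induction m with
  | zero => exact Measure.measurable_dirac
  | succ m ih => exact (Measure.measurable_bind' ih).comp (measurable_Pstep hS Q)

theorem isProbabilityMeasure_Piter (hS : Measurable S) (Q : Kernel E E) [IsMarkovKernel Q] (m : ℕ)
    (U : H × E) : IsProbabilityMeasure (Piter S Q m U) := by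
  induction m generalizing U with
  | zero => exact Measure.dirac.isProbabilityMeasure
  | succ m ih =>
    have : IsProbabilityMeasure (Pstep S Q U) :=
      Measure.isProbabilityMeasure_map (by fun_prop)
    exact isProbabilityMeasure_bind (measurable_Piter hS Q m).aemeasurable (.of_forall ih)

theorem Piter_one (S : H × E → H) (Q : Kernel E E) : Piter S Q 1 = Pstep S Q :=
  funext fun _ => Measure.bind_dirac

theorem Piter_two_apply (hS : Measurable S) (Q : Kernel E E) [IsSFiniteKernel Q] (U : H × E)
    {Γ : Set (H × E)} (hΓ : MeasurableSet Γ) :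
    Piter S Q 2 U Γ = ∫⁻ y, Q y ((fun z => (S (S (U.1, y), z), z)) ⁻¹' Γ) ∂Q U.2 := by
  have hstep (u : H) : Measurable fun z => (S (u, z), z) := by fun_prop
  have hP := measurable_Pstep hS Q
  calc Piter S Q 2 U Γ = ((Pstep S Q U).bind (Pstep S Q)) Γ := by rw [Piter, Piter_one]
    _ = ∫⁻ y, Pstep S Q (S (U.1, y), y) Γ ∂Q U.2 := by
        rw [Measure.bind_apply hΓ hP.aemeasurable, Pstep,
          lintegral_map (f := fun V => Pstep S Q V Γ) ((Measure.measurable_coe hΓ).comp hP)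
            (hstep U.1)]
    _ = _ := lintegral_congr fun y => Measure.map_apply (hstep _) hΓ

/-- The `H`-component after two steps from `u` driven by the noises `y`, then `z`, as a function of
`((u, z), y)`: the smoothing comes from `y` alone, so `z` is grouped with the parameter `u`. -/
def twoStep (S : H × E → H) (q : (H × E) × E) : H :=
  S (S (q.1.1, q.2), q.1.2)

theorem measurable_twoStep (hS : Measurable S) : Measurable (twoStep S) := by
  unfold twoStep
  fun_prop

theorem map_twoStep_prod_le_Piter_two (hS : Measurable S) [IsSFiniteKernel Q] {U : H × E}
    {m n : Measure E} [SFinite n] (hm : m ≤ Q U.2) (hn : ∀ᵐ y ∂m, n ≤ Q y) :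
    (m.prod n).map (fun q => (twoStep S ((U.1, q.2), q.1), q.2)) ≤ Piter S Q 2 U := by
  have hmap : Measurable fun q : E × E => (twoStep S ((U.1, q.2), q.1), q.2) :=
    ((measurable_twoStep hS).comp (by fun_prop)).prodMk measurable_snd
  refine Measure.le_iff.2 fun Γ hΓ => ?_
  rw [Measure.map_apply hmap hΓ, Measure.prod_apply (hmap hΓ), Piter_two_apply hS Q U hΓ]
  calc _ ≤ ∫⁻ y, Q y ((fun z => (S (S (U.1, y), z), z)) ⁻¹' Γ) ∂m :=
        lintegral_mono_ae (hn.mono fun y hy => hy _)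
    _ ≤ _ := lintegral_mono' hm le_rfl

theorem prod_le_Piter_two (hS : Measurable S) [IsSFiniteKernel Q] {U : H × E} {τ : Measure H}
    {m n : Measure E} [SFinite τ] [SFinite m] [SFinite n] (hm : m ≤ Q U.2)
    (hn : ∀ᵐ y ∂m, n ≤ Q y) (hτ : ∀ᵐ z ∂n, τ ≤ m.map fun y => twoStep S ((U.1, z), y)) :
    τ.prod n ≤ Piter S Q 2 U :=
  (prod_le_map_prod ((measurable_twoStep hS).comp (by fun_prop)) hτ).trans
    (map_twoStep_prod_le_Piter_two hS hm hn)

end TwoSteps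

section Minorisation

variable {H E : Type*} [NormedAddCommGroup H] [NormedSpace ℝ H] [NormedAddCommGroup E]
  [NormedSpace ℝ E] {S : H × E → H} {S' : H × E →L[ℝ] H} {u₀ : H} {η₀ : E}

theorem hasStrictFDerivAt_twoStep (hS : HasStrictFDerivAt S S' (u₀, η₀)) (hfix : S (u₀, η₀) = u₀) :
    HasStrictFDerivAt (twoStep S)
      (S'.comp ((S'.comp (((ContinuousLinearMap.fst ℝ H E).comp
        (ContinuousLinearMap.fst ℝ (H × E) E)).prod (ContinuousLinearMap.snd ℝ (H × E) E))).prod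
        ((ContinuousLinearMap.snd ℝ H E).comp (ContinuousLinearMap.fst ℝ (H × E) E))))
      ((u₀, η₀), η₀) := by
  let inner : (H × E) × E →L[ℝ] H × E := ((ContinuousLinearMap.fst ℝ H E).comp
    (ContinuousLinearMap.fst ℝ (H × E) E)).prod (ContinuousLinearMap.snd ℝ (H × E) E)
  let last : (H × E) × E →L[ℝ] E :=
    (ContinuousLinearMap.snd ℝ H E).comp (ContinuousLinearMap.fst ℝ (H × E) E)
  have hinner : HasStrictFDerivAt (fun q => S (inner q)) (S'.comp inner) ((u₀, η₀), η₀) :=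
    HasStrictFDerivAt.comp (g := S) _ hS inner.hasStrictFDerivAt
  refine HasStrictFDerivAt.comp (g := S) (f := fun q => (S (inner q), last q)) _ ?_
    (hinner.prodMk last.hasStrictFDerivAt)
  have hbase : (S (inner ((u₀, η₀), η₀)), last ((u₀, η₀), η₀)) = (u₀, η₀) :=
    Prod.ext hfix rfl
  rwa [hbase]

variable [FiniteDimensional ℝ H] [MeasurableSpace H] [BorelSpace H] [FiniteDimensional ℝ E]
  [MeasurableSpace E] [BorelSpace E]

theorem exists_eventually_le_Piter_two (ν : Measure E) [ν.IsAddHaarMeasure]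
    (hS_meas : Measurable S) (hS : HasStrictFDerivAt S S' (u₀, η₀)) (hfix : S (u₀, η₀) = u₀)
    (hinr : Function.Surjective (S'.comp (ContinuousLinearMap.inr ℝ H E)))
    (hinl : Function.Surjective (S'.comp (ContinuousLinearMap.inl ℝ H E)))
    {K : Set E} (hη₀K : η₀ ∈ K) {Q : Kernel E E} [IsSFiniteKernel Q] (hQK : Q η₀ Kᶜ = 0)
    {ρ : E → E → ℝ≥0∞} (hρ : LowerSemicontinuousAt (fun p : E × E => ρ p.1 p.2) (η₀, η₀))
    (hρ_pos : 0 < ρ η₀ η₀) (hQ : ∀ᶠ y in 𝓝[K] η₀, ν.withDensity (ρ y) ≤ Q y) :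
    ∃ lam : Measure (H × E), lam ≠ 0 ∧
      ∀ᶠ U in 𝓝[Prod.snd ⁻¹' K] (u₀, η₀), lam ≤ Piter S Q 2 U := by
  obtain ⟨c, hc_pos, hc⟩ := exists_between hρ_pos
  obtain ⟨N, hN, hη₀N, hNQ⟩ := exists_isOpen_smul_restrict_le hρ hc hQ
  have hN_mem : ∀ᵐ y ∂c • ν.restrict N, y ∈ N ∩ K := by
    have hK : ∀ᵐ y ∂Q η₀, y ∈ K := hQK
    filter_upwards [ae_mono (hNQ η₀ ⟨hη₀N, hη₀K⟩) hK,
      Measure.ae_smul_measure (ae_restrict_mem hN.measurableSet) c] with y hyK hyN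
    exact ⟨hyN, hyK⟩
  let μ : Measure H := Measure.addHaar
  obtain ⟨t, ht, κ, hκ, hκ_le⟩ := exists_eventually_smul_restrict_le_map_of_surjective μ ν
    (fun p => (measurable_twoStep hS_meas).comp measurable_prodMk_left)
    (hasStrictFDerivAt_twoStep hS hfix) (hinl.comp hinr) (hN.mem_nhds hη₀N)
  obtain ⟨V, hV, W, hW, hVW⟩ := mem_nhds_prod_iff.1 hκ_le
  obtain ⟨B, hBWN, hB, hη₀B⟩ := _root_.mem_nhds_iff.1 (Filter.inter_mem hW (hN.mem_nhds hη₀N))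
  let τ : Measure H := c • κ • μ.restrict (closedBall (twoStep S ((u₀, η₀), η₀)) t)
  let n : Measure E := c • ν.restrict B
  have hn_le : n ≤ c • ν.restrict N :=
    smul_mono_right c (Measure.restrict_mono_set ν (hBWN.trans inter_subset_right))
  have hn_mem : ∀ᵐ z ∂n, z ∈ B := Measure.ae_smul_measure (ae_restrict_mem hB.measurableSet) c
  refine ⟨τ.prod n, ?_, ?_⟩
  · rw [← Measure.measure_univ_ne_zero, ← univ_prod_univ, Measure.prod_prod]
    simp [τ, n, μ, hc_pos.ne', hκ, (measure_closedBall_pos μ _ ht).ne',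
      (hB.measure_pos ν ⟨η₀, hη₀B⟩).ne']
  · filter_upwards [inter_mem_nhdsWithin (Prod.snd ⁻¹' K) (prod_mem_nhds hV (hN.mem_nhds hη₀N))]
      with U ⟨hUK, hUV, hUN⟩
    refine prod_le_Piter_two hS_meas (hNQ U.2 ⟨hUN, hUK⟩)
      (hN_mem.mono fun y hy => hn_le.trans (hNQ y hy)) (hn_mem.mono fun z hz => ?_)
    rw [Measure.map_smul]
    exact smul_mono_right c (hVW (mk_mem_prod hUV (hBWN hz).1))

theorem coupling_property_general (ν : Measure E) [ν.IsAddHaarMeasure] (X : Set H) (K : Set E)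
    (hη₀K : η₀ ∈ K) (hS_meas : Measurable S) (hS : HasStrictFDerivAt S S' (u₀, η₀))
    (hfix : S (u₀, η₀) = u₀)
    (hinr : Function.Surjective (S'.comp (ContinuousLinearMap.inr ℝ H E)))
    (hinl : Function.Surjective (S'.comp (ContinuousLinearMap.inl ℝ H E)))
    (Q : Kernel E E) [IsMarkovKernel Q] (hQK : Q η₀ Kᶜ = 0)
    {ρ : E → E → ℝ≥0∞} (hρ : LowerSemicontinuousAt (fun p : E × E => ρ p.1 p.2) (η₀, η₀))
    (hρ_pos : 0 < ρ η₀ η₀) (hQ : ∀ᶠ y in 𝓝[K] η₀, ν.withDensity (ρ y) ≤ Q y) :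
    ∃ (lam : Measure (H × E)) (δ : ℝ), lam ≠ 0 ∧ 0 < δ ∧
      (∀ U ∈ closedBall (u₀, η₀) δ ∩ X ×ˢ K,
        ∀ Γ : Set (H × E), MeasurableSet Γ → lam Γ ≤ Piter S Q 2 U Γ) ∧
      (∀ U₁ ∈ closedBall (u₀, η₀) δ ∩ X ×ˢ K, ∀ U₂ ∈ closedBall (u₀, η₀) δ ∩ X ×ˢ K,
        ∀ Γ : Set (H × E), MeasurableSet Γ →
          |(Piter S Q 2 U₁ Γ).toReal - (Piter S Q 2 U₂ Γ).toReal|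
            ≤ 1 - (lam (X ×ˢ K)).toReal) := by
  obtain ⟨lam, hlam, hlam_le⟩ :=
    exists_eventually_le_Piter_two ν hS_meas hS hfix hinr hinl hη₀K hQK hρ hρ_pos hQ
  obtain ⟨δ, hδ, hball⟩ := (nhdsWithin_hasBasis nhds_basis_closedBall _).mem_iff.1 hlam_le
  have hlam_le_Piter (U) (hU : U ∈ closedBall (u₀, η₀) δ ∩ X ×ˢ K) : lam ≤ Piter S Q 2 U :=
    hball ⟨hU.1, hU.2.2⟩
  have := isProbabilityMeasure_Piter hS_meas Q 2
  refine ⟨lam, δ, hlam, hδ, fun U hU Γ _ => hlam_le_Piter U hU Γ, fun U₁ h₁ U₂ h₂ Γ hΓ => ?_⟩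
  have : IsFiniteMeasure lam := isFiniteMeasure_of_le _ (hlam_le_Piter U₁ h₁)
  calc |(Piter S Q 2 U₁).real Γ - (Piter S Q 2 U₂).real Γ|
      ≤ 1 - lam.real univ :=
        abs_measureReal_sub_le_of_le (hlam_le_Piter U₁ h₁) (hlam_le_Piter U₂ h₂) hΓ
    _ ≤ 1 - lam.real (X ×ˢ K) := sub_le_sub_left (measureReal_mono (subset_univ _)) 1

end Minorisation

/-- **Coupling property (Cou) / minorisation of the two-step transition probability.**  Under
the Controllability hypothesis on `S` and the Minorisation hypothesis on `Q`, there exist a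
nonzero non-negative measure `λ` on `𝔛 = X × K` and a number `δ > 0` such that
`𝒫₂(U;·) ≥ λ` for all `U ∈ B̄_𝔛(0,δ)`; consequently
`‖𝒫₂(U₁;·) − 𝒫₂(U₂;·)‖_var ≤ 1 − λ(𝔛)` for all `U₁, U₂ ∈ B̄_𝔛(0,δ)`. -/
theorem coupling_property
    {H E : Type*}
    [NormedAddCommGroup H] [InnerProductSpace ℝ H] [FiniteDimensional ℝ H]
    [MeasurableSpace H] [BorelSpace H]
    [NormedAddCommGroup E] [InnerProductSpace ℝ E] [FiniteDimensional ℝ E]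
    [MeasureSpace E] [BorelSpace E] [(volume : Measure E).IsAddHaarMeasure]
    (X : Set H) (K : Set E) (hX : IsCompact X) (hK : IsCompact K)
    (h0X : (0 : H) ∈ X) (h0K : (0 : E) ∈ K)
    (S : H × E → H) (hS : ContDiff ℝ 2 S) (hS0 : S (0, 0) = 0)
    (hinv : ∀ u ∈ X, ∀ η ∈ K, S (u, η) ∈ X)
    -- Controllability
    (hsurj : Function.Surjective ((fderiv ℝ S (0, 0)).comp (ContinuousLinearMap.inr ℝ H E)))
    (hiso : Function.Bijective ((fderiv ℝ S (0, 0)).comp (ContinuousLinearMap.inl ℝ H E)))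
    -- the transition probability Q
    (Q : Kernel E E) [IsMarkovKernel Q]
    (hFeller : ∀ f : BoundedContinuousFunction E ℝ, Continuous fun y => ∫ z, f z ∂(Q y))
    (hsuppQ : ∀ y ∈ K, Q y Kᶜ = 0)
    -- Minorisation
    (hminor : ∃ r > 0, ∃ ρ : E → E → ℝ,
      (∀ y z, 0 ≤ ρ y z) ∧ (∃ Cb : ℝ, ∀ y z, ρ y z ≤ Cb) ∧
      ContinuousOn (fun p : E × E => ρ p.1 p.2) (closedBall 0 r ×ˢ univ) ∧
      0 < ρ 0 0 ∧
      ∀ y ∈ K ∩ closedBall 0 r, ∀ A : Set E, MeasurableSet A →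
        ∫⁻ z in A, ENNReal.ofReal (ρ y z) ≤ Q y A) :
    ∃ (lam : Measure (H × E)) (δ : ℝ), lam ≠ 0 ∧ 0 < δ ∧
      (∀ U ∈ closedBall (0 : H × E) δ ∩ X ×ˢ K,
        ∀ Γ : Set (H × E), MeasurableSet Γ → lam Γ ≤ Piter S Q 2 U Γ) ∧
      (∀ U₁ ∈ closedBall (0 : H × E) δ ∩ X ×ˢ K,
        ∀ U₂ ∈ closedBall (0 : H × E) δ ∩ X ×ˢ K,
        ∀ Γ : Set (H × E), MeasurableSet Γ →
          |(Piter S Q 2 U₁ Γ).toReal - (Piter S Q 2 U₂ Γ).toReal|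
            ≤ 1 - (lam (X ×ˢ K)).toReal) := by
  obtain ⟨r, hr, ρ, -, -, hρ, hρ_pos, hQ⟩ := hminor
  have hρ_cont : ContinuousAt (fun p : E × E => ENNReal.ofReal (ρ p.1 p.2)) (0, 0) :=
    (ENNReal.continuous_ofReal.comp_continuousOn hρ).continuousAt
      (prod_mem_nhds (closedBall_mem_nhds 0 hr) Filter.univ_mem)
  have hQ_density : ∀ᶠ y in 𝓝[K] 0, volume.withDensity (fun z => .ofReal (ρ y z)) ≤ Q y := by
    filter_upwards [inter_mem_nhdsWithin K (closedBall_mem_nhds 0 hr)] with y hy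
    exact Measure.le_iff.2 fun A hA => (withDensity_apply _ hA).trans_le (hQ y hy A hA)
  exact coupling_property_general volume X K h0K hS.continuous.measurable
    (hS.contDiffAt.hasStrictFDerivAt two_ne_zero) hS0 hsurj hiso.surjective Q (hsuppQ 0 h0K)
    hρ_cont.lowerSemicontinuousAt (ENNReal.ofReal_pos.2 hρ_pos) hQ_density
end
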